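/- arXiv:1706.00518 — 2 statements merged into one kernel-verified Lean document; each statement's English description precedes it below -/
import Mathlib

section
/- The pullback along κ (i.e., letting the standard generators x, y of U_q^+ act as x_0, x_2 respectively) induces a bijection between the set of isomorphism classes of finite-dimensional irreducible □_q-modules of type 1 and the set of isomorphism classes of NonNil finite-dimensional irreducible U_q^+-modules of type (1,1). -/
/-!
Write `X, Z` for the actions of `x₀, x₂` and `Y, Y'` for those of `x₁, x₃`. Everything rests on
eigenspaces indexed so that `ev q d X i` is the eigenspace of `X` for `q ^ (d - 2 i)`. The
`q`-Weyl relation between `X` and `Y` says that `X` acts on the eigenspaces of `Y`, and `Y` on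
those of `X`, as a known scalar plus a shift of the index by one (`Weyl.raise`). Hence the flags
of eigenspaces of `X` and `Y` agree, and likewise those of `Y` and `Z` in the other direction
(`Weyl.flag`, `Weyl.coflag`). The `q`-Serre relation is equivalent to a tridiagonal action on
eigenspaces (`tri_of_serre`, `serre_of_tri`).

*Existence.* For an irreducible `U_q^+`-module, the sums over `i` of
`(V*₀ + ⋯ + V*ᵢ) ∩ (Vᵢ₊ᵣ + ⋯ + V_d)` are invariant under `X` and `Z` (`spl_raise`, `spl_lower`),
so they are `0` for `r = 1` and everything for `r = 0`. This gives the split decomposition, on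
whose `i`-th component `Y` is defined to be `q ^ (2 i - d)` (`exists_weyl`); `Y'` comes from
exchanging `X` and `Z`. The `q`-Serre relations between `Y` and `Y'` then follow from the Weyl
relations (`serre_of_weyl`), since `Y'` moves both flags defining the decomposition by one step.

*Irreducibility of the restriction.* Let `W` be a minimal nonzero subspace invariant under `X, Z`.
Comparing flags via `Y` and via `Y'` shows that the first eigenvalue indices of `X` and of `Z` on
`W` coincide (`endpoint_compare`), so `W` contains eigenvectors of `Y` and of `Y'`. The sum of the
intersections of `W` with the eigenspaces of `Y` is then a nonzero invariant subspace of `W`,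
hence `W` itself, and `W` is `Y`-invariant (`minimal_invariant`); the same holds for `Y'`.

*Injectivity.* For an isomorphism `σ` of the restrictions, the kernel of `σ Y - Y σ` is invariant
under `X, Z` and nonzero, hence everything (`intertwine`).
-/

noncomputable section

open FreeAlgebra

variable (F : Type) [Field F]

/-- The defining relations of the algebra `□_q` (Terwilliger), on the free algebra
with generators `x_i`, `i ∈ ℤ/4ℤ`. -/
inductive BoxRel (q : F) : FreeAlgebra F (ZMod 4) → FreeAlgebra F (ZMod 4) → Prop
  | rel1 (i : ZMod 4) : BoxRel q
      (q • (ι F i * ι F (i + 1)) - q⁻¹ • (ι F (i + 1) * ι F i))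
      ((q - q⁻¹) • (1 : FreeAlgebra F (ZMod 4)))
  | rel2 (i : ZMod 4) : BoxRel q
      (ι F i ^ 3 * ι F (i + 2) +
        ((q ^ 3 - (q⁻¹) ^ 3) / (q - q⁻¹)) • (ι F i * ι F (i + 2) * ι F i ^ 2))
      (((q ^ 3 - (q⁻¹) ^ 3) / (q - q⁻¹)) • (ι F i ^ 2 * ι F (i + 2) * ι F i) +
        ι F (i + 2) * ι F i ^ 3)

/-- The algebra `□_q`, presented by generators and relations. -/
abbrev BoxQ (q : F) : Type := RingQuot (BoxRel F q)

/-- The generators `x_i` of `□_q`. -/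
def bx (q : F) (i : ZMod 4) : BoxQ F q :=
  RingQuot.mkAlgHom F (BoxRel F q) (ι F i)

/-- `f` acts semisimply: `V` is spanned by the eigenspaces of `f`. -/
def SemisimpleOn {V : Type} [AddCommGroup V] [Module F V] (f : Module.End F V) : Prop :=
  (⨆ θ : F, Module.End.eigenspace f θ) = ⊤

/-- The set of (distinct) eigenvalues of `f`. -/
def EigSet {V : Type} [AddCommGroup V] [Module F V] (f : Module.End F V) : Set F :=
  {θ : F | Module.End.eigenspace f θ ≠ ⊥}

/-- The representation `π` of `A` on `V` is irreducible. -/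
def IsIrrep {A V : Type} [Ring A] [Algebra F A] [AddCommGroup V] [Module F V]
    (π : A →ₐ[F] Module.End F V) : Prop :=
  Nontrivial V ∧ ∀ W : Submodule F V, (∀ a : A, ∀ v ∈ W, π a v ∈ W) → W = ⊥ ∨ W = ⊤

/-- Isomorphism of representations of `A`. -/
def RepIso {A V W : Type} [Ring A] [Algebra F A] [AddCommGroup V] [Module F V]
    [AddCommGroup W] [Module F W]
    (π : A →ₐ[F] Module.End F V) (π' : A →ₐ[F] Module.End F W) : Prop :=
  ∃ σ : V ≃ₗ[F] W, ∀ (a : A) (v : V), σ (π a v) = π' a (σ v)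

/-- The `□_q`-module given by `π` has type `1` and diameter `d`: each generator `x_i`
acts semisimply with set of distinct eigenvalues `{q^(d-2n) : 0 ≤ n ≤ d}`. -/
def Type1Diam (q : F) {V : Type} [AddCommGroup V] [Module F V]
    (π : BoxQ F q →ₐ[F] Module.End F V) (d : ℕ) : Prop :=
  ∀ i : ZMod 4, SemisimpleOn F (π (bx F q i)) ∧
    EigSet F (π (bx F q i)) =
      {θ : F | ∃ n : ℕ, n ≤ d ∧ θ = q ^ ((d : ℤ) - 2 * (n : ℤ))}

/-- The defining relations of `U_q^+`, the positive part of `U_q(L(sl₂))`;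
the standard generators are `x = ι F true` and `y = ι F false`. -/
inductive UqpRel (q : F) : FreeAlgebra F Bool → FreeAlgebra F Bool → Prop
  | relx : UqpRel q
      (ι F true ^ 3 * ι F false +
        ((q ^ 3 - (q⁻¹) ^ 3) / (q - q⁻¹)) • (ι F true * ι F false * ι F true ^ 2))
      (((q ^ 3 - (q⁻¹) ^ 3) / (q - q⁻¹)) • (ι F true ^ 2 * ι F false * ι F true) +
        ι F false * ι F true ^ 3)
  | rely : UqpRel q
      (ι F false ^ 3 * ι F true +
        ((q ^ 3 - (q⁻¹) ^ 3) / (q - q⁻¹)) • (ι F false * ι F true * ι F false ^ 2))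
      (((q ^ 3 - (q⁻¹) ^ 3) / (q - q⁻¹)) • (ι F false ^ 2 * ι F true * ι F false) +
        ι F true * ι F false ^ 3)

/-- The algebra `U_q^+`. -/
abbrev Uqp (q : F) : Type := RingQuot (UqpRel F q)

/-- The standard generator `x` of `U_q^+`. -/
def ux (q : F) : Uqp F q := RingQuot.mkAlgHom F (UqpRel F q) (ι F true)

/-- The standard generator `y` of `U_q^+`. -/
def uy (q : F) : Uqp F q := RingQuot.mkAlgHom F (UqpRel F q) (ι F false)

/-- The `□_q`-module given by `π` is irreducible of type 1. -/
def Box1 (q : F) {V : Type} [AddCommGroup V] [Module F V]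
    (π : BoxQ F q →ₐ[F] Module.End F V) : Prop :=
  IsIrrep F π ∧ ∃ d : ℕ, Type1Diam F q π d

/-- The `U_q^+`-module given by `Φ` is NonNil irreducible of type `(1,1)`. -/
def Uqp11 (q : F) {V : Type} [AddCommGroup V] [Module F V]
    (Φ : Uqp F q →ₐ[F] Module.End F V) : Prop :=
  IsIrrep F Φ ∧ ¬ IsNilpotent (Φ (ux F q)) ∧ ¬ IsNilpotent (Φ (uy F q)) ∧
    ∃ d : ℕ, SemisimpleOn F (Φ (ux F q)) ∧ SemisimpleOn F (Φ (uy F q)) ∧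
      EigSet F (Φ (ux F q)) =
        {θ : F | ∃ n : ℕ, n ≤ d ∧ θ = q ^ ((d : ℤ) - 2 * (n : ℤ))} ∧
      EigSet F (Φ (uy F q)) =
        {θ : F | ∃ n : ℕ, n ≤ d ∧ θ = q ^ ((d : ℤ) - 2 * (n : ℤ))}

section Helpers

variable {F}
variable {V : Type} [AddCommGroup V] [Module F V]

/-! ### Partial sums of a family of subspaces -/

/-- The sum of the members of a family of subspaces with index in `S`; for `S = Set.Ici i`
and `S = Set.Iic i` these are the terms of the two flags attached to the family. -/
def part (G : ℤ → Submodule F V) (S : Set ℤ) : Submodule F V := ⨆ j ∈ S, G j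

lemma le_part {G : ℤ → Submodule F V} {S : Set ℤ} {j : ℤ} (hj : j ∈ S) : G j ≤ part G S :=
  le_iSup₂_of_le j hj le_rfl

lemma part_le {G : ℤ → Submodule F V} {S : Set ℤ} {T : Submodule F V}
    (h : ∀ j ∈ S, G j ≤ T) : part G S ≤ T := iSup₂_le h

lemma part_mono {G : ℤ → Submodule F V} {S T : Set ℤ} (h : S ⊆ T) : part G S ≤ part G T :=
  part_le fun _ hj => le_part (h hj)

lemma part_union (G : ℤ → Submodule F V) (S T : Set ℤ) :
    part G (S ∪ T) = part G S ⊔ part G T := iSup_union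

lemma part_eq_top {G : ℤ → Submodule F V} {S : Set ℤ} (hG : ⨆ i, G i = ⊤)
    (h : ∀ j, j ∉ S → G j = ⊥) : part G S = ⊤ := by
  rw [eq_top_iff, ← hG]
  refine iSup_le fun j => ?_
  by_cases hj : j ∈ S
  · exact le_part hj
  · rw [h j hj]; exact bot_le

lemma part_eq_bot {G : ℤ → Submodule F V} {S : Set ℤ} (h : ∀ j ∈ S, G j = ⊥) :
    part G S = ⊥ :=
  eq_bot_iff.2 <| part_le fun j hj => (h j hj).le

lemma part_inf {G : ℤ → Submodule F V} (hG : iSupIndep G) (S T : Set ℤ) :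
    part G S ⊓ part G T = part G (S ∩ T) := by
  have hd : Disjoint (part G (S \ T)) (part G T) :=
    hG.disjoint_biSup_biSup Set.disjoint_sdiff_left
  have h1 : part G S = part G (S ∩ T) ⊔ part G (S \ T) := by
    rw [← part_union, Set.inter_union_sdiff]
  rw [h1, sup_inf_assoc_of_le _ (part_mono Set.inter_subset_right), hd.eq_bot, sup_bot_eq]

lemma part_mapsTo {G : ℤ → Submodule F V} {S : Set ℤ} {T : Submodule F V}
    {f : Module.End F V} (h : ∀ j ∈ S, ∀ v ∈ G j, f v ∈ T) : ∀ v ∈ part G S, f v ∈ T :=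
  fun _ hv => (part_le (T := T.comap f) fun j hj w hw => h j hj w hw) hv

lemma part_raise {G : ℤ → Submodule F V} {f : Module.End F V} {c : ℤ → F}
    (hf : ∀ i, ∀ v ∈ G i, f v - c i • v ∈ G (i + 1)) (i : ℤ) :
    ∀ v ∈ part G (Set.Ici i), f v - c i • v ∈ part G (Set.Ici (i + 1)) := by
  refine part_mapsTo (f := f - c i • 1) fun j hj v hv => ?_
  have h1 : f v - c j • v ∈ part G (Set.Ici (i + 1)) :=
    le_part (by simp only [Set.mem_Ici] at *; omega) (hf j v hv)
  rcases eq_or_lt_of_le (Set.mem_Ici.1 hj) with rfl | hlt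
  · simpa using h1
  · have h2 : v ∈ part G (Set.Ici (i + 1)) :=
      le_part (by simp only [Set.mem_Ici] at *; omega) hv
    have h3 : (f - c i • 1 : Module.End F V) v = (f v - c j • v) + (c j - c i) • v := by
      simp only [LinearMap.sub_apply, LinearMap.smul_apply, Module.End.one_apply, sub_smul]
      abel
    rw [h3]
    exact add_mem h1 (Submodule.smul_mem _ _ h2)

lemma part_comp_sub (G : ℤ → Submodule F V) (d i : ℤ) :
    part (fun j => G (d - j)) (Set.Ici i) = part G (Set.Iic (d - i)) := by
  apply le_antisymm
  · exact part_le fun j hj => le_part (by simp only [Set.mem_Ici, Set.mem_Iic] at *; omega)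
  · refine part_le fun j hj => ?_
    have : G j = (fun j => G (d - j)) (d - j) := by simp
    rw [this]
    exact le_part (G := fun j => G (d - j)) (by simp only [Set.mem_Ici, Set.mem_Iic] at *; omega)

lemma part_lower {G : ℤ → Submodule F V} {f : Module.End F V} {c : ℤ → F}
    (hf : ∀ i, ∀ v ∈ G i, f v - c i • v ∈ G (i - 1)) (i : ℤ) :
    ∀ v ∈ part G (Set.Iic i), f v - c i • v ∈ part G (Set.Iic (i - 1)) := by
  have h := part_raise (G := fun j => G (0 - j)) (f := f) (c := fun j => c (0 - j))
    (fun i v hv => by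
      have := hf _ v hv
      rwa [show (0 - i - 1 : ℤ) = 0 - (i + 1) by ring] at this) (0 - i)
  rw [part_comp_sub, part_comp_sub] at h
  simpa [show -(-i + 1) = i - 1 by ring] using h

/-- An eigenvector of an operator acting triangularly on a flag lies in the term of the flag
belonging to its eigenvalue, provided it lies in some larger term. -/
lemma climb {P : ℤ → Submodule F V} {f : Module.End F V} {c : ℤ → F}
    (hc : Function.Injective c)
    (hf : ∀ i, ∀ v ∈ P i, f v - c i • v ∈ P (i + 1)) {m i : ℤ} (hmi : m ≤ i) {v : V}
    (hv : v ∈ P m) (hfv : f v = c i • v) : v ∈ P i := by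
  have key : ∀ k, m ≤ k → k ≤ i → v ∈ P k := by
    intro k hk
    induction k, hk using Int.leInduction with
    | base => exact fun _ => hv
    | succ k hk ih =>
      intro hki
      have h1 := hf k v (ih (by omega))
      rw [hfv, ← sub_smul] at h1
      have hne : c i - c k ≠ 0 := sub_ne_zero.2 (hc.ne (by omega))
      exact (Submodule.smul_mem_iff _ hne).1 h1
  exact key i hmi le_rfl

lemma ext_of_iSup {W : Type} [AddCommGroup W] [Module F W] {G : ℤ → Submodule F V}
    (hG : ⨆ i, G i = ⊤) {f g : V →ₗ[F] W} (h : ∀ i, ∀ v ∈ G i, f v = g v) : f = g := by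
  have : (⨆ i, G i) ≤ LinearMap.eqLocus f g := iSup_le fun i v hv => h i v hv
  rw [hG] at this
  exact LinearMap.ext fun v => this Submodule.mem_top

lemma exists_scalar_on {G : ℤ → Submodule F V} (hi : iSupIndep G) (hG : ⨆ i, G i = ⊤)
    (c : ℤ → F) : ∃ f : Module.End F V, ∀ i, ∀ v ∈ G i, f v = c i • v := by
  have hint : DirectSum.IsInternal G :=
    DirectSum.isInternal_submodule_of_iSupIndep_of_iSup_eq_top hi hG
  let e := LinearEquiv.ofBijective (DirectSum.coeLinearMap G) hint
  refine ⟨(DirectSum.toModule F ℤ V fun i => c i • (G i).subtype) ∘ₗ e.symm.toLinearMap, ?_⟩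
  intro i v hv
  have h1 : e.symm v = DirectSum.lof F ℤ (fun i => G i) i ⟨v, hv⟩ := by
    rw [LinearEquiv.symm_apply_eq]
    exact (DirectSum.coeLinearMap_lof G i ⟨v, hv⟩).symm
  simp [h1]

/-! ### Eigenspaces -/

/-- The eigenspace of `X` for the eigenvalue `q ^ (d - 2 i)`, with `i` running over all
integers so that shifts of the index need no case distinction. -/
def ev (q : F) (d : ℕ) (X : Module.End F V) (i : ℤ) : Submodule F V :=
  Module.End.eigenspace X (q ^ ((d : ℤ) - 2 * i))

lemma mem_ev {q : F} {d : ℕ} {X : Module.End F V} {i : ℤ} {v : V} :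
    v ∈ ev q d X i ↔ X v = q ^ ((d : ℤ) - 2 * i) • v := Module.End.mem_eigenspace_iff

lemma ev_inv (q : F) (d : ℕ) (X : Module.End F V) (i : ℤ) :
    ev q⁻¹ d X i = ev q d X (d - i) := by
  unfold ev
  rw [inv_zpow', show -((d : ℤ) - 2 * i) = d - 2 * (d - i) by ring]

/-- `X` is diagonalizable with set of eigenvalues `{q ^ (d - 2 i) : 0 ≤ i ≤ d}`. -/
def Good (q : F) (d : ℕ) (X : Module.End F V) : Prop :=
  (⨆ i, ev q d X i = ⊤) ∧ (∀ i, i < 0 ∨ (d : ℤ) < i → ev q d X i = ⊥) ∧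
    ∀ i, 0 ≤ i → i ≤ (d : ℤ) → ev q d X i ≠ ⊥

/-- `q` is nonzero and not a root of unity. -/
def Generic (q : F) : Prop := q ≠ 0 ∧ ∀ n : ℕ, 0 < n → q ^ n ≠ 1

lemma Generic.inv {q : F} (h : Generic q) : Generic q⁻¹ :=
  ⟨inv_ne_zero h.1, fun n hn => by simpa using h.2 n hn⟩

lemma Generic.zpow_inj {q : F} (h : Generic q) {m n : ℤ} (hmn : q ^ m = q ^ n) : m = n := by
  have key : ∀ m n : ℤ, q ^ m = q ^ n → ¬ m < n := by
    intro m n hmn hlt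
    obtain ⟨k, hk⟩ := Int.eq_ofNat_of_zero_le (sub_nonneg.2 hlt.le)
    refine h.2 k (by omega) ?_
    rw [← zpow_natCast, ← hk, zpow_sub₀ h.1, hmn, div_self (zpow_ne_zero _ h.1)]
  exact le_antisymm (not_lt.1 (key n m hmn.symm)) (not_lt.1 (key m n hmn))

lemma Generic.ev_injective {q : F} (h : Generic q) (d : ℕ) :
    Function.Injective fun i : ℤ => q ^ ((d : ℤ) - 2 * i) := fun i j hij => by
  have := h.zpow_inj hij
  omega

lemma Generic.indep {q : F} (h : Generic q) (d : ℕ) (X : Module.End F V) :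
    iSupIndep (ev q d X) :=
  (Module.End.eigenspaces_iSupIndep X).comp (h.ev_injective d)

lemma Generic.sub_inv_ne {q : F} (h : Generic q) : q - q⁻¹ ≠ 0 := by
  intro h0
  have h1 : q = q⁻¹ := sub_eq_zero.1 h0
  refine h.2 2 (by norm_num) ?_
  have h2 : q * q = q * q⁻¹ := congrArg (q * ·) h1
  rw [mul_inv_cancel₀ h.1] at h2
  rw [pow_two, h2]

lemma Good.inv {q : F} {d : ℕ} {X : Module.End F V} (h : Good q d X) : Good q⁻¹ d X := by
  obtain ⟨h1, h2, h3⟩ := h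
  refine ⟨?_, fun i hi => ?_, fun i hi hi' => ?_⟩
  · rw [eq_top_iff, ← h1]
    refine iSup_le fun i => ?_
    have : ev q d X i = ev q⁻¹ d X (d - i) := by rw [ev_inv]; congr 1; ring
    rw [this]
    exact le_iSup (ev q⁻¹ d X) _
  · rw [ev_inv]; exact h2 _ (by omega)
  · rw [ev_inv]; exact h3 _ (by omega) (by omega)

lemma Good.up_top {q : F} {d : ℕ} {X : Module.End F V} (h : Good q d X) {i : ℤ} (hi : i ≤ 0) :
    part (ev q d X) (Set.Ici i) = ⊤ :=
  part_eq_top h.1 fun j hj => h.2.1 j (Or.inl (by simp only [Set.mem_Ici] at hj; omega))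

lemma Good.up_bot {q : F} {d : ℕ} {X : Module.End F V} (h : Good q d X) {i : ℤ}
    (hi : (d : ℤ) < i) : part (ev q d X) (Set.Ici i) = ⊥ :=
  part_eq_bot fun j hj => h.2.1 j (Or.inr (by simp only [Set.mem_Ici] at hj; omega))

lemma Good.down_bot {q : F} {d : ℕ} {X : Module.End F V} (h : Good q d X) {i : ℤ}
    (hi : i < 0) : part (ev q d X) (Set.Iic i) = ⊥ :=
  part_eq_bot fun j hj => h.2.1 j (Or.inl (by simp only [Set.mem_Iic] at hj; omega))

lemma good_of_type {q : F} (hq : Generic q) {d : ℕ} {X : Module.End F V}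
    (hs : SemisimpleOn F X)
    (he : EigSet F X = {θ : F | ∃ n : ℕ, n ≤ d ∧ θ = q ^ ((d : ℤ) - 2 * (n : ℤ))}) :
    Good q d X := by
  refine ⟨?_, fun i hi => ?_, fun i hi hi' => ?_⟩
  · rw [eq_top_iff, ← show _ = ⊤ from hs]
    refine iSup_le fun θ => ?_
    by_cases h : θ ∈ EigSet F X
    · rw [he] at h
      obtain ⟨n, -, rfl⟩ := h
      exact le_iSup (ev q d X) n
    · rw [show Module.End.eigenspace X θ = ⊥ from not_not.1 h]
      exact bot_le
  · by_contra hne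
    have h : q ^ ((d : ℤ) - 2 * i) ∈ EigSet F X := hne
    rw [he] at h
    obtain ⟨n, hn, h⟩ := h
    have := hq.zpow_inj h
    omega
  · have h : q ^ ((d : ℤ) - 2 * i) ∈ EigSet F X := by
      rw [he]
      lift i to ℕ using hi
      exact ⟨i, by omega, rfl⟩
    exact h

lemma type_of_good {q : F} {d : ℕ} {X : Module.End F V} (h : Good q d X) :
    SemisimpleOn F X ∧
      EigSet F X = {θ : F | ∃ n : ℕ, n ≤ d ∧ θ = q ^ ((d : ℤ) - 2 * (n : ℤ))} := by
  obtain ⟨h1, h2, h3⟩ := h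
  refine ⟨?_, Set.ext fun θ => ⟨fun hθ => ?_, ?_⟩⟩
  · rw [SemisimpleOn, eq_top_iff, ← h1]
    exact iSup_le fun i => le_iSup (Module.End.eigenspace X) _
  · by_contra hne
    have hd := Module.End.eigenspaces_iSupIndep X θ
    have ht : (⨆ μ, ⨆ (_ : μ ≠ θ), Module.End.eigenspace X μ) = ⊤ := by
      rw [eq_top_iff, ← h1]
      refine iSup_le fun i => ?_
      by_cases hi : i < 0 ∨ (d : ℤ) < i
      · rw [h2 i hi]; exact bot_le
      · refine le_iSup₂_of_le (q ^ ((d : ℤ) - 2 * i)) ?_ le_rfl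
        rintro rfl
        lift i to ℕ using (by omega)
        exact hne ⟨i, by omega, rfl⟩
    rw [ht, disjoint_top] at hd
    exact hθ hd
  · rintro ⟨n, hn, rfl⟩
    exact h3 n (by omega) (by omega)

/-! ### The `q`-Weyl relation -/

/-- The `q`-Weyl relation `q X Y - q⁻¹ Y X = q - q⁻¹`. -/
def Weyl (q : F) (X Y : Module.End F V) : Prop :=
  q • (X * Y) - q⁻¹ • (Y * X) = (q - q⁻¹) • (1 : Module.End F V)

lemma Weyl.apply {q : F} {X Y : Module.End F V} (h : Weyl q X Y) (v : V) :
    q • X (Y v) - q⁻¹ • Y (X v) = (q - q⁻¹) • v := by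
  simpa using congrArg (fun f : Module.End F V => f v) h

lemma Weyl.inv {q : F} {X Y : Module.End F V} (h : Weyl q X Y) : Weyl q⁻¹ Y X := by
  unfold Weyl at *
  rw [inv_inv, ← neg_sub, h, ← neg_smul, neg_sub]

lemma Weyl.raise {q : F} (hq : Generic q) {X Y : Module.End F V} (h : Weyl q X Y) (d : ℕ)
    (i : ℤ) (v : V) (hv : v ∈ ev q d X i) :
    Y v - (q⁻¹) ^ ((d : ℤ) - 2 * i) • v ∈ ev q d X (i + 1) := by
  have h0 := hq.1
  rw [mem_ev] at hv ⊢
  have h1 := h.apply v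
  have hθ : q ^ ((d : ℤ) - 2 * i) ≠ 0 := zpow_ne_zero _ h0
  rw [inv_zpow, show (d : ℤ) - 2 * (i + 1) = (d - 2 * i) + (-2) by ring, zpow_add₀ h0]
  rw [show q ^ (-2 : ℤ) = q⁻¹ * q⁻¹ by rw [zpow_neg, ← mul_inv, zpow_ofNat, pow_two]]
  generalize q ^ ((d : ℤ) - 2 * i) = θ at *
  rw [hv, map_smul, sub_eq_iff_eq_add] at h1
  have h2 : X (Y v) = q⁻¹ • ((q - q⁻¹) • v + q⁻¹ • θ • Y v) := by
    rw [← h1, inv_smul_smul₀ h0]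
  rw [map_sub, map_smul, h2, hv]
  match_scalars
  · field_simp
    ring
  · field_simp

lemma Weyl.raise' {q : F} (hq : Generic q) {X Y : Module.End F V} (h : Weyl q X Y) (d : ℕ)
    (i : ℤ) (v : V) (hv : v ∈ ev q⁻¹ d Y i) :
    X v - q ^ ((d : ℤ) - 2 * i) • v ∈ ev q⁻¹ d Y (i + 1) := by
  simpa using h.inv.raise hq.inv d i v hv

lemma Weyl.lower {q : F} (hq : Generic q) {Y Z : Module.End F V} (h : Weyl q Y Z) (d : ℕ)
    (i : ℤ) (v : V) (hv : v ∈ ev q⁻¹ d Y i) :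
    Z v - q ^ ((d : ℤ) - 2 * i) • v ∈ ev q⁻¹ d Y (i - 1) := by
  rw [ev_inv] at *
  have := h.raise hq d _ v hv
  rw [inv_zpow', show -((d : ℤ) - 2 * (d - i)) = d - 2 * i by ring] at this
  rwa [show (d : ℤ) - (i - 1) = d - i + 1 by ring]

lemma Weyl.lower' {q : F} (hq : Generic q) {Y Z : Module.End F V} (h : Weyl q Y Z) (d : ℕ)
    (i : ℤ) (v : V) (hv : v ∈ ev q d Z i) :
    Y v - (q⁻¹) ^ ((d : ℤ) - 2 * i) • v ∈ ev q d Z (i - 1) := by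
  have := h.inv.lower hq.inv d i v (by rwa [inv_inv])
  rwa [inv_inv] at this

/-- If `X, Y` satisfy the `q`-Weyl relation, then `X` acts triangularly on the eigenspaces
of `Y` and conversely, so the two descending flags of eigenspaces coincide. -/
lemma Weyl.flag {q : F} (hq : Generic q) {X Y : Module.End F V} (h : Weyl q X Y) {d : ℕ}
    (hX : Good q d X) (hY : Good q d Y) (i : ℤ) :
    part (ev q d X) (Set.Ici i) = part (ev q⁻¹ d Y) (Set.Ici i) := by
  apply le_antisymm <;> refine part_le fun j hj v hv => ?_
  · have hv' : v ∈ part (ev q⁻¹ d Y) (Set.Ici j) :=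
      climb (P := fun j => part (ev q⁻¹ d Y) (Set.Ici j)) (f := X)
        (hq.ev_injective d) (part_raise (h.raise' hq d)) (min_le_right 0 j)
        (by rw [hY.inv.up_top (min_le_left 0 j)]; trivial) (mem_ev.1 hv)
    exact part_mono (Set.Ici_subset_Ici.2 hj) hv'
  · have hv' : v ∈ part (ev q d X) (Set.Ici j) :=
      climb (P := fun j => part (ev q d X) (Set.Ici j)) (f := Y)
        (hq.inv.ev_injective d) (part_raise (h.raise hq d)) (min_le_right 0 j)
        (by rw [hX.up_top (min_le_left 0 j)]; trivial) (mem_ev.1 hv)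
    exact part_mono (Set.Ici_subset_Ici.2 hj) hv'

lemma part_ev_inv (q : F) (d : ℕ) (X : Module.End F V) (i : ℤ) :
    part (ev q⁻¹ d X) (Set.Ici i) = part (ev q d X) (Set.Iic (d - i)) := by
  rw [← part_comp_sub]
  congr 1
  funext j
  exact ev_inv q d X j

lemma Weyl.coflag {q : F} (hq : Generic q) {Y Z : Module.End F V} (h : Weyl q Y Z) {d : ℕ}
    (hY : Good q d Y) (hZ : Good q d Z) (i : ℤ) :
    part (ev q⁻¹ d Y) (Set.Iic i) = part (ev q d Z) (Set.Iic i) := by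
  have h1 := h.flag hq hY hZ (d - i)
  rw [part_ev_inv, sub_sub_cancel] at h1
  rw [← h1]
  have h2 := part_ev_inv q⁻¹ d Y (d - i)
  rw [inv_inv, sub_sub_cancel] at h2
  exact h2.symm

/-! ### The cubic `q`-Serre relation -/

/-- The cubic `q`-Serre relation, cubic in `X` and linear in `Z`. -/
def Serre (q : F) (X Z : Module.End F V) : Prop :=
  X ^ 3 * Z + ((q ^ 3 - (q⁻¹) ^ 3) / (q - q⁻¹)) • (X * Z * X ^ 2) =
    ((q ^ 3 - (q⁻¹) ^ 3) / (q - q⁻¹)) • (X ^ 2 * Z * X) + Z * X ^ 3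

lemma Generic.qnum_three {q : F} (hq : Generic q) :
    (q ^ 3 - (q⁻¹) ^ 3) / (q - q⁻¹) = q ^ 2 + 1 + (q⁻¹) ^ 2 := by
  have h1 := hq.sub_inv_ne
  have h0 := hq.1
  rw [div_eq_iff h1]
  field_simp
  ring

/-- On the eigenspace of `X` for `θ`, the two sides of the `q`-Serre relation differ by the
cubic polynomial in `X` with roots `q² θ`, `θ`, `q⁻² θ`, applied after `Z`. -/
lemma serre_apply_iff {q : F} (hq : Generic q) {X Z : Module.End F V} {θ : F} {v : V}
    (hv : X v = θ • v) :
    (X ^ 3 * Z + ((q ^ 3 - (q⁻¹) ^ 3) / (q - q⁻¹)) • (X * Z * X ^ 2)) v =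
      (((q ^ 3 - (q⁻¹) ^ 3) / (q - q⁻¹)) • (X ^ 2 * Z * X) + Z * X ^ 3) v ↔
    X (X (X (Z v))) - ((q ^ 2 + 1 + (q⁻¹) ^ 2) * θ) • X (X (Z v))
      + ((q ^ 2 + 1 + (q⁻¹) ^ 2) * θ ^ 2) • X (Z v) - θ ^ 3 • Z v = 0 := by
  rw [hq.qnum_three, ← sub_eq_zero]
  simp only [pow_succ, pow_zero, one_mul, LinearMap.add_apply, Module.End.mul_apply,
    LinearMap.smul_apply, hv, map_smul]
  refine Eq.congr ?_ rfl
  module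

/-- Lagrange interpolation: a vector annihilated by `(X - a)(X - b)(X - c)` is a sum of
eigenvectors. -/
lemma mem_sup_of_cubic {X : Module.End F V} {a b c : F} (hab : a ≠ b) (hac : a ≠ c)
    (hbc : b ≠ c) {w : V}
    (h : X (X (X w)) - (a + b + c) • X (X w) + (a * b + a * c + b * c) • X w
      - (a * b * c) • w = 0) {S : Submodule F V}
    (ha : Module.End.eigenspace X a ≤ S) (hb : Module.End.eigenspace X b ≤ S)
    (hc : Module.End.eigenspace X c ≤ S) : w ∈ S := by
  have h3 : X (X (X w)) = (a + b + c) • X (X w) - (a * b + a * c + b * c) • X w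
      + (a * b * c) • w := by
    rw [← sub_eq_zero, ← h]; module
  have h1 := sub_ne_zero.2 hab
  have h2 := sub_ne_zero.2 hac
  have h4 := sub_ne_zero.2 hbc
  have key : ∀ a b c : F, X (X (X w)) = (a + b + c) • X (X w)
      - (a * b + a * c + b * c) • X w + (a * b * c) • w →
      X (X w) - (b + c) • X w + (b * c) • w ∈ Module.End.eigenspace X a := by
    intro a b c h
    rw [Module.End.mem_eigenspace_iff]
    simp only [map_add, map_sub, map_smul, h]
    module
  have ka := ha (key a b c h3)
  have kb := hb (key b a c (by rw [h3]; module))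
  have kc := hc (key c a b (by rw [h3]; module))
  have hw : w = ((a - b) * (a - c))⁻¹ • (X (X w) - (b + c) • X w + (b * c) • w)
      - ((a - b) * (b - c))⁻¹ • (X (X w) - (a + c) • X w + (a * c) • w)
      + ((a - c) * (b - c))⁻¹ • (X (X w) - (a + b) • X w + (a * b) • w) := by
    match_scalars <;> field_simp <;> ring
  rw [hw]
  exact add_mem (sub_mem (S.smul_mem _ ka) (S.smul_mem _ kb)) (S.smul_mem _ kc)

lemma zpow_shift_up {q : F} (h0 : q ≠ 0) (d i : ℤ) :
    q ^ (d - 2 * (i - 1)) = q ^ 2 * q ^ (d - 2 * i) := by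
  rw [show d - 2 * (i - 1) = 2 + (d - 2 * i) by ring, zpow_add₀ h0, zpow_ofNat]

lemma zpow_shift_down {q : F} (h0 : q ≠ 0) (d i : ℤ) :
    q ^ (d - 2 * (i + 1)) = (q⁻¹) ^ 2 * q ^ (d - 2 * i) := by
  rw [show d - 2 * (i + 1) = -2 + (d - 2 * i) by ring, zpow_add₀ h0, zpow_neg, inv_pow,
    zpow_ofNat]

lemma tri_of_serre {q : F} (hq : Generic q) {X Z : Module.End F V} (h : Serre q X Z) (d : ℕ)
    (i : ℤ) (v : V) (hv : v ∈ ev q d X i) :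
    Z v ∈ part (ev q d X) (Set.Icc (i - 1) (i + 1)) := by
  have h0 := hq.1
  have h1 := (serre_apply_iff hq (mem_ev.1 hv)).1 (congrArg (fun f : Module.End F V => f v) h)
  have hinj := hq.ev_injective d
  refine mem_sup_of_cubic (X := X) (hinj.ne (show i - 1 ≠ i by omega))
    (hinj.ne (show i - 1 ≠ i + 1 by omega)) (hinj.ne (show i ≠ i + 1 by omega)) ?_
    (le_part (G := ev q d X) (Set.mem_Icc.2 ⟨by omega, by omega⟩))
    (le_part (G := ev q d X) (Set.mem_Icc.2 ⟨by omega, by omega⟩))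
    (le_part (G := ev q d X) (Set.mem_Icc.2 ⟨by omega, by omega⟩))
  simp only [zpow_shift_up h0, zpow_shift_down h0]
  generalize q ^ ((d : ℤ) - 2 * i) = θ at *
  rw [← h1]
  match_scalars <;> field_simp

lemma serre_of_tri {q : F} (hq : Generic q) {X Z : Module.End F V} {d : ℕ}
    (hX : ⨆ i, ev q d X i = ⊤)
    (h : ∀ i, ∀ v ∈ ev q d X i, Z v ∈ part (ev q d X) (Set.Icc (i - 1) (i + 1))) :
    Serre q X Z := by
  have h0 := hq.1
  refine ext_of_iSup hX fun i v hv => (serre_apply_iff hq (mem_ev.1 hv)).2 ?_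
  have key : ∀ w ∈ part (ev q d X) (Set.Icc (i - 1) (i + 1)),
      (X * X * X - ((q ^ 2 + 1 + (q⁻¹) ^ 2) * q ^ ((d : ℤ) - 2 * i)) • (X * X)
        + ((q ^ 2 + 1 + (q⁻¹) ^ 2) * (q ^ ((d : ℤ) - 2 * i)) ^ 2) • X
        - (q ^ ((d : ℤ) - 2 * i)) ^ 3 • 1 : Module.End F V) w ∈ (⊥ : Submodule F V) := by
    refine part_mapsTo fun j hj w hw => ?_
    rw [mem_ev] at hw
    obtain ⟨hj1, hj2⟩ := hj
    have hj : j = i - 1 ∨ j = i ∨ j = i + 1 := by omega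
    simp only [Submodule.mem_bot, LinearMap.sub_apply, LinearMap.add_apply,
      LinearMap.smul_apply, Module.End.mul_apply, Module.End.one_apply, hw, map_smul]
    rcases hj with rfl | rfl | rfl
    · rw [zpow_shift_up h0]
      match_scalars
      field_simp
      ring
    · match_scalars
      ring
    · rw [zpow_shift_down h0]
      match_scalars
      field_simp
      ring
  simpa using key (Z v) (h i v hv)

/-- If `X, Y, Z, Y'` cyclically satisfy the `q`-Weyl relations, then `Y, Y'` automatically
satisfy the `q`-Serre relation: the eigenspace of `Y` with index `i` is the intersection of a
term of the flag of `X` and one of the flag of `Z`, and `Y'` moves both by one step. -/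
lemma serre_of_weyl {q : F} (hq : Generic q) {X Y Z Y' : Module.End F V} {d : ℕ}
    (hXY : Weyl q X Y) (hYZ : Weyl q Y Z) (hZY : Weyl q Z Y') (hYX : Weyl q Y' X)
    (hX : Good q d X) (hY : Good q d Y) (hZ : Good q d Z) : Serre q Y Y' := by
  have main : Serre q⁻¹ Y Y' := by
    refine serre_of_tri hq.inv hY.inv.1 fun i v hv => ?_
    have h1 : Y' v ∈ part (ev q⁻¹ d Y) (Set.Iic (i + 1)) := by
      rw [hYZ.coflag hq hY hZ]
      have hv1 : v ∈ part (ev q d Z) (Set.Iic i) := by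
        rw [← hYZ.coflag hq hY hZ]
        exact le_part (G := ev q⁻¹ d Y) (Set.mem_Iic.2 le_rfl) hv
      refine part_mapsTo (fun j hj w hw => ?_) v hv1
      have h2 := hZY.raise hq d j w hw
      have h3 : Y' w = (Y' w - (q⁻¹) ^ ((d : ℤ) - 2 * j) • w) + (q⁻¹) ^ ((d : ℤ) - 2 * j) • w := by
        abel
      rw [h3]
      refine add_mem (le_part (G := ev q d Z) ?_ h2)
        (Submodule.smul_mem _ _ (le_part (G := ev q d Z) ?_ hw)) <;>
      · simp only [Set.mem_Iic] at *; omega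
    have h2 : Y' v ∈ part (ev q⁻¹ d Y) (Set.Ici (i - 1)) := by
      rw [← hXY.flag hq hX hY]
      have hv1 : v ∈ part (ev q d X) (Set.Ici i) := by
        rw [hXY.flag hq hX hY]
        exact le_part (G := ev q⁻¹ d Y) (Set.mem_Ici.2 le_rfl) hv
      refine part_mapsTo (fun j hj w hw => ?_) v hv1
      have h2 := hYX.lower' hq d j w hw
      have h3 : Y' w = (Y' w - (q⁻¹) ^ ((d : ℤ) - 2 * j) • w) + (q⁻¹) ^ ((d : ℤ) - 2 * j) • w := by
        abel
      rw [h3]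
      refine add_mem (le_part (G := ev q d X) ?_ h2)
        (Submodule.smul_mem _ _ (le_part (G := ev q d X) ?_ hw)) <;>
      · simp only [Set.mem_Ici] at *; omega
    have h3 := part_inf (hq.inv.indep d Y) (Set.Ici (i - 1)) (Set.Iic (i + 1))
    rw [Set.Ici_inter_Iic] at h3
    rw [← h3]
    exact ⟨h2, h1⟩
  unfold Serre at *
  rw [hq.inv.qnum_three, inv_inv, show (q⁻¹) ^ 2 + 1 + q ^ 2 = q ^ 2 + 1 + (q⁻¹) ^ 2 by ring,
    ← hq.qnum_three] at main
  exact main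

/-! ### The split decomposition of an irreducible `U_q^+`-module -/

/-- The only subspaces invariant under both `X` and `Z` are `⊥` and `⊤`. -/
def Irr2 (X Z : Module.End F V) : Prop :=
  ∀ W : Submodule F V, (∀ v ∈ W, X v ∈ W) → (∀ v ∈ W, Z v ∈ W) → W = ⊥ ∨ W = ⊤

/-- The `i`-th component of the `(Z, X)`-split decomposition, shifted by `r`: the sum of the
first eigenspaces of `Z` (up to index `i`) meets the sum of the last ones of `X` (from `i + r`
on). -/
def spl (q : F) (d : ℕ) (X Z : Module.End F V) (r i : ℤ) : Submodule F V :=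
  part (ev q d Z) (Set.Iic i) ⊓ part (ev q d X) (Set.Ici (i + r))

lemma spl_raise {q : F} (hq : Generic q) {X Z : Module.End F V} (hZX : Serre q Z X) (d : ℕ)
    (r i : ℤ) (v : V) (hv : v ∈ spl q d X Z r i) :
    X v - q ^ ((d : ℤ) - 2 * (i + r)) • v ∈ spl q d X Z r (i + 1) := by
  obtain ⟨h1, h2⟩ := hv
  refine ⟨sub_mem ?_ (Submodule.smul_mem _ _ ?_), ?_⟩
  · refine part_mapsTo (fun j hj w hw => ?_) v h1
    refine part_mono (fun k hk => ?_) (tri_of_serre hq hZX d j w hw)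
    simp only [Set.mem_Icc, Set.mem_Iic] at *
    omega
  · exact part_mono (Set.Iic_subset_Iic.2 (by omega)) h1
  · have := part_raise (G := ev q d X) (f := X) (c := fun i : ℤ => q ^ ((d : ℤ) - 2 * i))
      (fun i v hv => by rw [mem_ev.1 hv, sub_self]; exact zero_mem _) (i + r) v h2
    rwa [show i + 1 + r = i + r + 1 by ring]

lemma spl_lower {q : F} (hq : Generic q) {X Z : Module.End F V} (hXZ : Serre q X Z) (d : ℕ)
    (r i : ℤ) (v : V) (hv : v ∈ spl q d X Z r i) :
    Z v - q ^ ((d : ℤ) - 2 * i) • v ∈ spl q d X Z r (i - 1) := by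
  obtain ⟨h1, h2⟩ := hv
  refine ⟨?_, sub_mem ?_ (Submodule.smul_mem _ _ ?_)⟩
  · exact part_lower (G := ev q d Z) (f := Z) (c := fun i : ℤ => q ^ ((d : ℤ) - 2 * i))
      (fun i v hv => by rw [mem_ev.1 hv, sub_self]; exact zero_mem _) i v h1
  · refine part_mapsTo (fun j hj w hw => ?_) v h2
    refine part_mono (fun k hk => ?_) (tri_of_serre hq hXZ d j w hw)
    simp only [Set.mem_Icc, Set.mem_Ici] at *
    omega
  · exact part_mono (Set.Ici_subset_Ici.2 (by omega)) h2

lemma iSup_mapsTo {G : ℤ → Submodule F V} {f : Module.End F V}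
    (h : ∀ i, ∀ v ∈ G i, f v ∈ ⨆ i, G i) : ∀ v ∈ ⨆ i, G i, f v ∈ ⨆ i, G i :=
  fun _ hv => (iSup_le (a := (⨆ i, G i).comap f) fun i w hw => h i w hw) hv

lemma mem_iSup_of_shift {G : ℤ → Submodule F V} {i j : ℤ} {c : F} {v w : V} (hv : v ∈ G i)
    (hw : w - c • v ∈ G j) : w ∈ ⨆ i, G i := by
  have h := add_mem (le_iSup G j hw) (Submodule.smul_mem _ c (le_iSup G i hv))
  simpa using h

lemma spl_bot_or_top {q : F} (hq : Generic q) {X Z : Module.End F V} (hXZ : Serre q X Z)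
    (hZX : Serre q Z X) (hirr : Irr2 X Z) (d : ℕ) (r : ℤ) :
    (⨆ i, spl q d X Z r i) = ⊥ ∨ (⨆ i, spl q d X Z r i) = ⊤ :=
  hirr _ (iSup_mapsTo fun i v hv => mem_iSup_of_shift hv (spl_raise hq hZX d r i v hv))
    (iSup_mapsTo fun i v hv => mem_iSup_of_shift hv (spl_lower hq hXZ d r i v hv))

lemma ev_disjoint_part {q : F} (hq : Generic q) (d : ℕ) (X : Module.End F V) {S : Set ℤ}
    {i : ℤ} (hi : i ∉ S) (hne : ev q d X i ≠ ⊥) : ¬ ev q d X i ≤ part (ev q d X) S := by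
  intro hle
  exact hne (disjoint_self.1 (((hq.indep d X).disjoint_biSup hi).mono_right hle))

lemma spl_disjoint {q : F} (hq : Generic q) {X Z : Module.End F V} (hXZ : Serre q X Z)
    (hZX : Serre q Z X) (hirr : Irr2 X Z) {d : ℕ} (hX : Good q d X) (hZ : Good q d Z)
    (i : ℤ) : Disjoint (part (ev q d Z) (Set.Iic i)) (part (ev q d X) (Set.Ici (i + 1))) := by
  rw [disjoint_iff]
  rcases spl_bot_or_top hq hXZ hZX hirr d 1 with h | h
  · exact eq_bot_iff.2 (h ▸ le_iSup (spl q d X Z 1) i)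
  · exfalso
    have hle : (⨆ i, spl q d X Z 1 i) ≤ part (ev q d X) (Set.Ici 1) := by
      refine iSup_le fun i => ?_
      rcases lt_or_ge i 0 with hi | hi
      · rw [spl, hZ.down_bot hi]; simp
      · exact inf_le_right.trans (part_mono (Set.Ici_subset_Ici.2 (by omega)))
    rw [h] at hle
    exact ev_disjoint_part hq d X (S := Set.Ici 1) (i := 0) (by simp)
      (hX.2.2 0 le_rfl (by omega)) (le_top.trans hle)

lemma spl_top {q : F} (hq : Generic q) {X Z : Module.End F V} (hXZ : Serre q X Z)
    (hZX : Serre q Z X) (hirr : Irr2 X Z) {d : ℕ} (hX : Good q d X) (hZ : Good q d Z) :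
    (⨆ i, spl q d X Z 0 i) = ⊤ := by
  refine (spl_bot_or_top hq hXZ hZX hirr d 0).resolve_left fun h => ?_
  refine hZ.2.2 0 le_rfl (by omega) (eq_bot_iff.2 ?_)
  rw [← h]
  refine le_trans ?_ (le_iSup (spl q d X Z 0) 0)
  refine le_inf (le_part (G := ev q d Z) (Set.mem_Iic.2 le_rfl)) ?_
  rw [hX.up_top (by omega)]
  exact le_top

/-- Existence of the missing generator `Y` between `X` and `Z`: it acts on the `i`-th component
of the split decomposition as the scalar `q ^ (2 i - d)`. -/
lemma exists_weyl {q : F} (hq : Generic q) {X Z : Module.End F V} (hXZ : Serre q X Z)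
    (hZX : Serre q Z X) (hirr : Irr2 X Z) {d : ℕ} (hX : Good q d X) (hZ : Good q d Z) :
    ∃ Y : Module.End F V, Weyl q X Y ∧ Weyl q Y Z ∧ Good q d Y := by
  have hdisj := spl_disjoint hq hXZ hZX hirr hX hZ
  have htop := spl_top hq hXZ hZX hirr hX hZ
  have h0 := hq.1
  set U := spl q d X Z 0 with hU
  have hUZ : ∀ i, U i ≤ part (ev q d Z) (Set.Iic i) := fun i => inf_le_left
  have hUX : ∀ i, U i ≤ part (ev q d X) (Set.Ici i) := fun i => by
    have : U i ≤ part (ev q d X) (Set.Ici (i + 0)) := inf_le_right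
    rwa [add_zero] at this
  have hUZ' : ∀ i, part U (Set.Iic i) ≤ part (ev q d Z) (Set.Iic i) := fun i =>
    part_le fun j hj => (hUZ j).trans (part_mono (Set.Iic_subset_Iic.2 hj))
  have hUX' : ∀ i, part U (Set.Ici i) ≤ part (ev q d X) (Set.Ici i) := fun i =>
    part_le fun j hj => (hUX j).trans (part_mono (Set.Ici_subset_Ici.2 hj))
  have hind : iSupIndep U := by
    intro i
    have hle : (⨆ j, ⨆ (_ : j ≠ i), U j) ≤
        part (ev q d Z) (Set.Iic (i - 1)) ⊔ part (ev q d X) (Set.Ici (i + 1)) := by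
      refine iSup₂_le fun j hj => ?_
      rcases lt_or_gt_of_ne hj with h | h
      · exact le_sup_of_le_left ((hUZ j).trans (part_mono (Set.Iic_subset_Iic.2 (by omega))))
      · exact le_sup_of_le_right ((hUX j).trans (part_mono (Set.Ici_subset_Ici.2 (by omega))))
    refine Disjoint.mono_right hle ?_
    rw [Submodule.disjoint_def]
    intro x hx hx'
    obtain ⟨a, ha, b, hb, rfl⟩ := Submodule.mem_sup.1 hx'
    have hb' : b ∈ part (ev q d Z) (Set.Iic i) := by
      have := sub_mem (hUZ i hx) (part_mono (Set.Iic_subset_Iic.2 (by omega : i - 1 ≤ i)) ha)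
      simpa using this
    have hb0 : b = 0 := Submodule.disjoint_def.1 (hdisj i) b hb' hb
    subst hb0
    rw [add_zero] at hx ⊢
    have hd := hdisj (i - 1)
    rw [sub_add_cancel] at hd
    exact Submodule.disjoint_def.1 hd a ha (hUX i hx)
  have hZU : ∀ i, part (ev q d Z) (Set.Iic i) ≤ part U (Set.Iic i) := by
    intro i
    have h1 : part U (Set.Iic i) ⊔ part U (Set.Ici (i + 1)) = ⊤ := by
      rw [← part_union]
      refine part_eq_top htop fun j hj => absurd ?_ hj
      simp only [Set.mem_union, Set.mem_Iic, Set.mem_Ici]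
      omega
    have h2 : part U (Set.Ici (i + 1)) ⊓ part (ev q d Z) (Set.Iic i) = ⊥ :=
      ((hdisj i).mono_right (hUX' (i + 1))).symm.eq_bot
    have h3 := sup_inf_assoc_of_le (part U (Set.Ici (i + 1))) (hUZ' i)
    rw [h1, h2, top_inf_eq, sup_bot_eq] at h3
    exact h3.le
  have hUbot : ∀ i, i < 0 ∨ (d : ℤ) < i → U i = ⊥ := by
    intro i hi
    rw [eq_bot_iff]
    rcases hi with hi | hi
    · exact hZ.down_bot hi ▸ hUZ i
    · exact hX.up_bot hi ▸ hUX i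
  have hUne : ∀ i, 0 ≤ i → i ≤ (d : ℤ) → U i ≠ ⊥ := by
    intro i hi hi' hbot
    refine ev_disjoint_part hq d Z (S := Set.Iic (i - 1)) (i := i) (by simp)
      (hZ.2.2 i hi hi') ?_
    refine (le_part (G := ev q d Z) (Set.mem_Iic.2 le_rfl)).trans ((hZU i).trans ?_)
    refine le_trans (part_le fun j hj => ?_) (hUZ' (i - 1))
    rcases eq_or_lt_of_le (Set.mem_Iic.1 hj) with rfl | hlt
    · rw [hbot]; exact bot_le
    · exact le_part (Set.mem_Iic.2 (by omega))
  obtain ⟨Y, hY⟩ := exists_scalar_on hind htop fun i => (q⁻¹) ^ ((d : ℤ) - 2 * i)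
  have hUY : ∀ i, U i ≤ ev q⁻¹ d Y i := fun i v hv => mem_ev.2 (hY i v hv)
  have hgood : Good q⁻¹ d Y := by
    refine ⟨eq_top_iff.2 (htop ▸ iSup_mono hUY), fun i hi => ?_, fun i hi hi' hbot => ?_⟩
    · have h1 := hq.inv.indep d Y i
      have h2 : (⨆ j, ⨆ (_ : j ≠ i), ev q⁻¹ d Y j) = ⊤ := by
        rw [eq_top_iff, ← htop]
        refine iSup_le fun j => ?_
        by_cases hj : j = i
        · rw [hj, hUbot i hi]; exact bot_le
        · exact le_iSup₂_of_le j hj (hUY j)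
      rwa [h2, disjoint_top] at h1
    · exact hUne i hi hi' (eq_bot_iff.2 (hbot ▸ hUY i))
  refine ⟨Y, ?_, ?_, by simpa using hgood.inv⟩
  · refine ext_of_iSup htop fun i v hv => ?_
    obtain ⟨w, hw⟩ : ∃ w, w = X v - q ^ ((d : ℤ) - 2 * i) • v := ⟨_, rfl⟩
    have hwU : w ∈ U (i + 1) := by
      have := spl_raise hq hZX d 0 i v hv
      rwa [add_zero, ← hw] at this
    have hXv : X v = q ^ ((d : ℤ) - 2 * i) • v + w := by rw [hw]; abel
    have hYw := hY (i + 1) w hwU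
    simp only [LinearMap.sub_apply, LinearMap.smul_apply, Module.End.mul_apply, hY i v hv,
      map_smul, hXv, map_add, hYw, Module.End.one_apply]
    rw [zpow_shift_down (inv_ne_zero h0), inv_inv, inv_zpow]
    have hθ : q ^ ((d : ℤ) - 2 * i) ≠ 0 := zpow_ne_zero _ h0
    generalize q ^ ((d : ℤ) - 2 * i) = θ at *
    match_scalars
    · field_simp
    · field_simp
      ring
  · refine ext_of_iSup htop fun i v hv => ?_
    obtain ⟨w, hw⟩ : ∃ w, w = Z v - q ^ ((d : ℤ) - 2 * i) • v := ⟨_, rfl⟩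
    have hwU : w ∈ U (i - 1) := by
      have := spl_lower hq hXZ d 0 i v hv
      rwa [← hw] at this
    have hZv : Z v = q ^ ((d : ℤ) - 2 * i) • v + w := by rw [hw]; abel
    have hYw := hY (i - 1) w hwU
    simp only [LinearMap.sub_apply, LinearMap.smul_apply, Module.End.mul_apply, hY i v hv,
      map_smul, hZv, map_add, hYw, Module.End.one_apply]
    rw [zpow_shift_up (inv_ne_zero h0), inv_zpow]
    have hθ : q ^ ((d : ℤ) - 2 * i) ≠ 0 := zpow_ne_zero _ h0
    generalize q ^ ((d : ℤ) - 2 * i) = θ at *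
    match_scalars
    · field_simp
    · field_simp
      ring

/-! ### Restriction of a `□_q`-module to `x₀, x₂` -/

/-- A nonzero `X`-invariant subspace has a first index `t` at which it meets an eigenspace
of `X`. -/
lemma exists_endpoint [FiniteDimensional F V] {q : F} {d : ℕ} {X : Module.End F V}
    (hX : Good q d X) {W : Submodule F V} (hW : W ≠ ⊥) (hinv : ∀ v ∈ W, X v ∈ W) :
    ∃ t : ℤ, W ≤ part (ev q d X) (Set.Ici t) ∧ ∃ w ∈ W, w ≠ 0 ∧ w ∈ ev q d X t := by
  classical
  have htype := type_of_good hX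
  have hdec : W = ⨆ μ, W ⊓ Module.End.eigenspace X μ :=
    Submodule.eq_iSup_inf_genEigenspace 1 hinv htype.1
  have hform : ∀ μ, W ⊓ Module.End.eigenspace X μ ≠ ⊥ →
      ∃ n : ℕ, μ = q ^ ((d : ℤ) - 2 * (n : ℤ)) := by
    intro μ hμ
    have h1 : μ ∈ EigSet F X := fun h0 => hμ (by rw [h0, inf_bot_eq])
    rw [htype.2] at h1
    obtain ⟨n, -, hn⟩ := h1
    exact ⟨n, hn⟩
  have hex : ∃ n : ℕ, W ⊓ ev q d X n ≠ ⊥ := by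
    by_contra! hno
    refine hW (eq_bot_iff.2 (hdec.le.trans (iSup_le fun μ => ?_)))
    by_contra hμ
    obtain ⟨n, rfl⟩ := hform μ fun h => hμ h.le
    exact hμ (hno n).le
  refine ⟨Nat.find hex, ?_, ?_⟩
  · refine hdec.le.trans (iSup_le fun μ => ?_)
    by_cases hμ : W ⊓ Module.End.eigenspace X μ = ⊥
    · rw [hμ]; exact bot_le
    · obtain ⟨n, rfl⟩ := hform μ hμ
      have hle : Nat.find hex ≤ n := Nat.find_min' hex hμ
      exact inf_le_right.trans
        (le_part (G := ev q d X) (j := (n : ℤ)) (Set.mem_Ici.2 (by exact_mod_cast hle)))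
  · obtain ⟨w, hw, hw0⟩ := Submodule.exists_mem_ne_zero_of_ne_bot (Nat.find_spec hex)
    exact ⟨w, hw.1, hw0, hw.2⟩

/-- A subspace `W` starting at index `t` with respect to `X` cannot contain an eigenvector of
`Z` of index `s < t`, and one of index `t` is an eigenvector of the operator `Y` between `X`
and `Z`. -/
lemma endpoint_compare {q : F} (hq : Generic q) {X Y Z : Module.End F V} {d : ℕ}
    (hXY : Weyl q X Y) (hYZ : Weyl q Y Z) (hX : Good q d X) (hY : Good q d Y)
    (hZ : Good q d Z) {t s : ℤ} {w : V} (hw0 : w ≠ 0)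
    (hwt : w ∈ part (ev q d X) (Set.Ici t)) (hws : w ∈ ev q d Z s) :
    t ≤ s ∧ (s = t → w ∈ ev q⁻¹ d Y t) := by
  have h1 : w ∈ part (ev q⁻¹ d Y) (Set.Ici t) := by rwa [← hXY.flag hq hX hY]
  have h2 : w ∈ part (ev q⁻¹ d Y) (Set.Iic s) := by
    rw [hYZ.coflag hq hY hZ]
    exact le_part (G := ev q d Z) (Set.mem_Iic.2 le_rfl) hws
  have h3 : w ∈ part (ev q⁻¹ d Y) (Set.Icc t s) := by
    rw [← Set.Ici_inter_Iic, ← part_inf (hq.inv.indep d Y)]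
    exact ⟨h1, h2⟩
  constructor
  · by_contra hlt
    rw [Set.Icc_eq_empty hlt] at h3
    exact hw0 (by simpa [part] using h3)
  · rintro rfl
    simpa [part] using h3

/-- If a minimal `(X, Z)`-invariant subspace contains an eigenvector of `Y`, then its
intersections with the eigenspaces of `Y` span it, so it is `Y`-invariant. -/
lemma minimal_invariant {q : F} (hq : Generic q) {X Y Z : Module.End F V} {d : ℕ}
    (hXY : Weyl q X Y) (hYZ : Weyl q Y Z) {W : Submodule F V}
    (hWX : ∀ v ∈ W, X v ∈ W) (hWZ : ∀ v ∈ W, Z v ∈ W)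
    (hmin : ∀ W' ≤ W, W' ≠ ⊥ → (∀ v ∈ W', X v ∈ W') → (∀ v ∈ W', Z v ∈ W') → W' = W)
    {t : ℤ} {w : V} (hw : w ∈ W) (hw0 : w ≠ 0) (hwt : w ∈ ev q⁻¹ d Y t) :
    ∀ v ∈ W, Y v ∈ W := by
  have heq : (⨆ i, W ⊓ ev q⁻¹ d Y i) = W := by
    refine hmin _ (iSup_le fun i => inf_le_left) ?_ ?_ ?_
    · refine (Submodule.ne_bot_iff _).2 ⟨w, ?_, hw0⟩
      exact le_iSup (fun i => W ⊓ ev q⁻¹ d Y i) t ⟨hw, hwt⟩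
    · refine iSup_mapsTo (G := fun i => W ⊓ ev q⁻¹ d Y i) fun i v hv => ?_
      exact mem_iSup_of_shift (G := fun i => W ⊓ ev q⁻¹ d Y i) hv (j := i + 1)
        ⟨sub_mem (hWX v hv.1) (W.smul_mem _ hv.1), hXY.raise' hq d i v hv.2⟩
    · refine iSup_mapsTo (G := fun i => W ⊓ ev q⁻¹ d Y i) fun i v hv => ?_
      exact mem_iSup_of_shift (G := fun i => W ⊓ ev q⁻¹ d Y i) hv (j := i - 1)
        ⟨sub_mem (hWZ v hv.1) (W.smul_mem _ hv.1), hYZ.lower hq d i v hv.2⟩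
  intro v hv
  rw [← heq] at hv
  refine (iSup_le (a := W.comap Y) fun i u hu => ?_) hv
  rw [Submodule.mem_comap, mem_ev.1 hu.2]
  exact W.smul_mem _ hu.1

lemma irr2_of_irr4 [FiniteDimensional F V] {q : F} (hq : Generic q)
    {X Y Z Y' : Module.End F V} {d : ℕ}
    (hXY : Weyl q X Y) (hYZ : Weyl q Y Z) (hZY : Weyl q Z Y') (hYX : Weyl q Y' X)
    (hX : Good q d X) (hY : Good q d Y) (hZ : Good q d Z) (hY' : Good q d Y')
    (hirr : ∀ W : Submodule F V, (∀ v ∈ W, X v ∈ W) → (∀ v ∈ W, Y v ∈ W) →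
      (∀ v ∈ W, Z v ∈ W) → (∀ v ∈ W, Y' v ∈ W) → W = ⊥ ∨ W = ⊤) : Irr2 X Z := by
  intro W₀ h₀X h₀Z
  by_contra! hcon
  obtain ⟨hbot, htop⟩ := hcon
  obtain ⟨W, ⟨hWle, hWbot, hWX, hWZ⟩, hWmin⟩ := wellFounded_lt.has_min
    {W : Submodule F V | W ≤ W₀ ∧ W ≠ ⊥ ∧ (∀ v ∈ W, X v ∈ W) ∧ (∀ v ∈ W, Z v ∈ W)}
    ⟨W₀, le_rfl, hbot, h₀X, h₀Z⟩
  have hmin : ∀ W' ≤ W, W' ≠ ⊥ → (∀ v ∈ W', X v ∈ W') → (∀ v ∈ W', Z v ∈ W') → W' = W := by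
    intro W' hle hne hX' hZ'
    by_contra hneq
    exact hWmin W' ⟨hle.trans hWle, hne, hX', hZ'⟩ (lt_of_le_of_ne hle hneq)
  obtain ⟨t, htW, w, hw, hw0, hwt⟩ := exists_endpoint hX hWbot hWX
  obtain ⟨s, hsW, u, hu, hu0, hus⟩ := exists_endpoint hZ hWbot hWZ
  have h1 := endpoint_compare hq hXY hYZ hX hY hZ hu0 (htW hu) hus
  have h2 := endpoint_compare hq hZY hYX hZ hY' hX hw0 (hsW hw) hwt
  have hst : s = t := le_antisymm h2.1 h1.1
  have hYinv := minimal_invariant hq hXY hYZ hWX hWZ hmin hu hu0 (h1.2 hst)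
  have hYinv' := minimal_invariant hq hZY hYX hWZ hWX
    (fun W' a b c e => hmin W' a b e c) hw hw0 (h2.2 hst.symm)
  rcases hirr W hWX hYinv hWZ hYinv' with h | h
  · exact hWbot h
  · exact htop (top_le_iff.1 (h ▸ hWle))

/-- An isomorphism intertwining `X` and `Z` intertwines the operators `Y` between them: the
kernel of the defect is invariant, and contains the last eigenspace of `X`. -/
lemma intertwine {W : Type} [AddCommGroup W] [Module F W] {q : F} (hq : Generic q)
    {X Y Z : Module.End F V} {X' Y' Z' : Module.End F W} {d : ℕ}
    (hXY : Weyl q X Y) (hYZ : Weyl q Y Z) (hXY' : Weyl q X' Y') (hYZ' : Weyl q Y' Z')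
    (hX : Good q d X) (hirr : Irr2 X Z) (σ : V ≃ₗ[F] W)
    (hσX : ∀ v, σ (X v) = X' (σ v)) (hσZ : ∀ v, σ (Z v) = Z' (σ v)) (v : V) :
    σ (Y v) = Y' (σ v) := by
  have h0 := hq.1
  obtain ⟨D, hD⟩ : ∃ D : V →ₗ[F] W, D = σ.toLinearMap ∘ₗ Y - Y' ∘ₗ σ.toLinearMap := ⟨_, rfl⟩
  have hDv : ∀ v, D v = σ (Y v) - Y' (σ v) := fun v => by simp [hD]
  have hDX : ∀ v, q • X' (D v) = q⁻¹ • D (X v) := by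
    intro v
    have e1 := congrArg σ (hXY.apply v)
    have e2 := hXY'.apply (σ v)
    simp only [map_sub, map_smul, hσX] at e1
    rw [← sub_eq_zero]
    simp only [hDv, map_sub, hσX]
    linear_combination (norm := module) e1 - e2
  have hDZ : ∀ v, q • D (Z v) = q⁻¹ • Z' (D v) := by
    intro v
    have e1 := congrArg σ (hYZ.apply v)
    have e2 := hYZ'.apply (σ v)
    simp only [map_sub, map_smul, hσZ] at e1
    rw [← sub_eq_zero]
    simp only [hDv, map_sub, hσZ]
    linear_combination (norm := module) e1 - e2
  have hker : LinearMap.ker D = ⊥ ∨ LinearMap.ker D = ⊤ := by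
    refine hirr _ (fun v hv => ?_) (fun v hv => ?_) <;> rw [LinearMap.mem_ker] at *
    · have := hDX v
      rw [hv, map_zero, smul_zero] at this
      exact (smul_eq_zero.1 this.symm).resolve_left (inv_ne_zero h0)
    · have := hDZ v
      rw [hv, map_zero, smul_zero] at this
      exact (smul_eq_zero.1 this).resolve_left h0
  have hne : LinearMap.ker D ≠ ⊥ := by
    obtain ⟨u, hu, hu0⟩ := Submodule.exists_mem_ne_zero_of_ne_bot
      (hX.2.2 d (by omega) le_rfl)
    refine (Submodule.ne_bot_iff _).2 ⟨u, ?_, hu0⟩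
    rw [LinearMap.mem_ker]
    -- `σ⁻¹ (D u)` would be an eigenvector of `X` of index `d + 1`.
    have h1 : σ.symm (D u) ∈ ev q d X (d + 1) := by
      rw [mem_ev]
      apply σ.injective
      rw [hσX, map_smul, LinearEquiv.apply_symm_apply, zpow_shift_down h0]
      have h2 := hDX u
      rw [mem_ev.1 hu, map_smul] at h2
      have h3 : X' (D u) = q⁻¹ • q⁻¹ • q ^ ((d : ℤ) - 2 * d) • D u := by
        rw [← h2, inv_smul_smul₀ h0]
      rw [h3, smul_smul, smul_smul]
      congr 1
      ring
    rw [hX.2.1 _ (Or.inr (by omega)), Submodule.mem_bot] at h1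
    simpa using h1
  have hv : v ∈ LinearMap.ker D := by rw [hker.resolve_left hne]; trivial
  rw [LinearMap.mem_ker, hDv] at hv
  exact sub_eq_zero.1 hv

/-! ### Passing between representations and operators -/

lemma free_invariant {I : Type} (ρ : FreeAlgebra F I →ₐ[F] Module.End F V)
    (W : Submodule F V) (h : ∀ i, ∀ v ∈ W, ρ (ι F i) v ∈ W) (a : FreeAlgebra F I) :
    ∀ v ∈ W, ρ a v ∈ W := by
  induction a using FreeAlgebra.induction with
  | grade0 r =>
    intro v hv
    rw [AlgHom.commutes, Module.algebraMap_end_apply]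
    exact W.smul_mem _ hv
  | grade1 i => exact h i
  | mul a b ha hb =>
    intro v hv
    rw [map_mul, Module.End.mul_apply]
    exact ha _ (hb v hv)
  | add a b ha hb =>
    intro v hv
    rw [map_add, LinearMap.add_apply]
    exact add_mem (ha v hv) (hb v hv)

lemma uqp_invariant {q : F} (Φ : Uqp F q →ₐ[F] Module.End F V) (W : Submodule F V)
    (hx : ∀ v ∈ W, Φ (ux F q) v ∈ W) (hy : ∀ v ∈ W, Φ (uy F q) v ∈ W) (a : Uqp F q) :
    ∀ v ∈ W, Φ a v ∈ W := by
  obtain ⟨a, rfl⟩ := RingQuot.mkAlgHom_surjective F (UqpRel F q) a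
  refine free_invariant (Φ.comp (RingQuot.mkAlgHom F (UqpRel F q))) W (fun i => ?_) a
  cases i
  · exact hy
  · exact hx

lemma box_invariant {q : F} (π : BoxQ F q →ₐ[F] Module.End F V) (W : Submodule F V)
    (h : ∀ i, ∀ v ∈ W, π (bx F q i) v ∈ W) (a : BoxQ F q) : ∀ v ∈ W, π a v ∈ W := by
  obtain ⟨a, rfl⟩ := RingQuot.mkAlgHom_surjective F (BoxRel F q) a
  exact free_invariant (π.comp (RingQuot.mkAlgHom F (BoxRel F q))) W h a

lemma box_weyl {q : F} (π : BoxQ F q →ₐ[F] Module.End F V) (i : ZMod 4) :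
    Weyl q (π (bx F q i)) (π (bx F q (i + 1))) := by
  have h := congrArg π (RingQuot.mkAlgHom_rel F (BoxRel.rel1 (F := F) (q := q) i))
  simp only [map_sub, map_smul, map_mul, map_one] at h
  exact h

lemma uqp_serre_x {q : F} (Φ : Uqp F q →ₐ[F] Module.End F V) :
    Serre q (Φ (ux F q)) (Φ (uy F q)) := by
  have h := congrArg Φ (RingQuot.mkAlgHom_rel F (UqpRel.relx (F := F) (q := q)))
  simp only [map_add, map_smul, map_mul, map_pow] at h
  exact h

lemma uqp_serre_y {q : F} (Φ : Uqp F q →ₐ[F] Module.End F V) :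
    Serre q (Φ (uy F q)) (Φ (ux F q)) := by
  have h := congrArg Φ (RingQuot.mkAlgHom_rel F (UqpRel.rely (F := F) (q := q)))
  simp only [map_add, map_smul, map_mul, map_pow] at h
  exact h

lemma exists_box_rep {q : F} (f : ZMod 4 → Module.End F V)
    (hw : ∀ i, Weyl q (f i) (f (i + 1))) (hs : ∀ i, Serre q (f i) (f (i + 2))) :
    ∃ π : BoxQ F q →ₐ[F] Module.End F V, ∀ i, π (bx F q i) = f i := by
  refine ⟨RingQuot.liftAlgHom F ⟨FreeAlgebra.lift F f, ?_⟩, fun i => ?_⟩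
  · rintro _ _ (i | i)
    · simp only [map_sub, map_smul, map_mul, map_one, FreeAlgebra.lift_ι_apply]
      exact hw i
    · simp only [map_add, map_smul, map_mul, map_pow, FreeAlgebra.lift_ι_apply]
      exact hs i
  · rw [bx, RingQuot.liftAlgHom_mkAlgHom_apply, FreeAlgebra.lift_ι_apply]

lemma uqp_hom_ext {q : F} {A : Type} [Ring A] [Algebra F A] {f g : Uqp F q →ₐ[F] A}
    (hx : f (ux F q) = g (ux F q)) (hy : f (uy F q) = g (uy F q)) : f = g := by
  refine RingQuot.ringQuot_ext' F f g (FreeAlgebra.hom_ext (funext fun i => ?_))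
  cases i
  · exact hy
  · exact hx

lemma repIso_of_gens {W : Type} [AddCommGroup W] [Module F W] {q : F}
    (π : BoxQ F q →ₐ[F] Module.End F V) (π' : BoxQ F q →ₐ[F] Module.End F W) (σ : V ≃ₗ[F] W)
    (h : ∀ i v, σ (π (bx F q i) v) = π' (bx F q i) (σ v)) : RepIso F π π' := by
  have heq : (σ.conjAlgEquiv F).toAlgHom.comp π = π' := by
    refine RingQuot.ringQuot_ext' F _ _ (FreeAlgebra.hom_ext (funext fun i => ?_))
    refine LinearMap.ext fun w => ?_
    have := h i (σ.symm w)
    rw [LinearEquiv.apply_symm_apply] at this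
    exact this
  refine ⟨σ, fun a v => ?_⟩
  rw [← heq]
  simp [LinearEquiv.conjAlgEquiv_apply]

lemma zmod4_forall {p : ZMod 4 → Prop} (h0 : p 0) (h1 : p 1) (h2 : p 2) (h3 : p 3) :
    ∀ i, p i := by
  intro i
  fin_cases i
  · exact h0
  · exact h1
  · exact h2
  · exact h3

lemma not_nilpotent_of_good {q : F} (hq : Generic q) {d : ℕ} {X : Module.End F V}
    (hX : Good q d X) : ¬ IsNilpotent X := by
  rintro ⟨n, hn⟩
  obtain ⟨v, hv, hv0⟩ := Submodule.exists_mem_ne_zero_of_ne_bot (hX.2.2 0 le_rfl (by omega))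
  have hpow : ∀ n : ℕ, (X ^ n) v = (q ^ ((d : ℤ) - 2 * 0)) ^ n • v := by
    intro n
    induction n with
    | zero => simp
    | succ n ih => rw [pow_succ', Module.End.mul_apply, ih, map_smul, mem_ev.1 hv, smul_smul,
        ← pow_succ]
  have h := hpow n
  rw [hn, LinearMap.zero_apply] at h
  exact (smul_ne_zero (pow_ne_zero n (zpow_ne_zero _ hq.1)) hv0) h.symm

/-- The data carried by an irreducible type 1 `□_q`-module, in terms of the operators. -/
lemma box1_data [FiniteDimensional F V] {q : F} (hq : Generic q)
    (π : BoxQ F q →ₐ[F] Module.End F V) (h : Box1 F q π) :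
    ∃ d : ℕ, (∀ i, Good q d (π (bx F q i))) ∧ Irr2 (π (bx F q 0)) (π (bx F q 2)) := by
  obtain ⟨⟨-, hirr⟩, d, ht⟩ := h
  have hg : ∀ i, Good q d (π (bx F q i)) := fun i => good_of_type hq (ht i).1 (ht i).2
  refine ⟨d, hg, irr2_of_irr4 hq (box_weyl π 0) (box_weyl π 1) (box_weyl π 2) (box_weyl π 3)
    (hg _) (hg _) (hg _) (hg _) fun W a b c e => hirr W ?_⟩
  exact box_invariant π W (zmod4_forall a b c e)

end Helpers

/-- Pullback along `κ` induces a bijection between isomorphism classes of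
finite-dimensional irreducible type-1 `□_q`-modules and isomorphism classes of
NonNil finite-dimensional irreducible type-`(1,1)` `U_q^+`-modules. -/
theorem stmt12 [IsAlgClosed F] [CharZero F] (q : F) (hq0 : q ≠ 0)
    (hq1 : ∀ n : ℕ, 0 < n → q ^ n ≠ 1)
    (κ : Uqp F q →ₐ[F] BoxQ F q)
    (hκx : κ (ux F q) = bx F q 0) (hκy : κ (uy F q) = bx F q 2) :
    (∀ (V : Type) [AddCommGroup V] [Module F V] [FiniteDimensional F V]
        (π : BoxQ F q →ₐ[F] Module.End F V),
        Box1 F q π → Uqp11 F q (π.comp κ)) ∧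
    (∀ (V : Type) [AddCommGroup V] [Module F V] [FiniteDimensional F V]
        (W : Type) [AddCommGroup W] [Module F W] [FiniteDimensional F W]
        (π : BoxQ F q →ₐ[F] Module.End F V) (π' : BoxQ F q →ₐ[F] Module.End F W),
        Box1 F q π → Box1 F q π' →
        (RepIso F (π.comp κ) (π'.comp κ) ↔ RepIso F π π')) ∧
    (∀ (V : Type) [AddCommGroup V] [Module F V] [FiniteDimensional F V]
        (Φ : Uqp F q →ₐ[F] Module.End F V), Uqp11 F q Φ →
        ∃ π : BoxQ F q →ₐ[F] Module.End F V, Box1 F q π ∧ π.comp κ = Φ) := by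
  have hq : Generic q := ⟨hq0, hq1⟩
  refine ⟨?_, ?_, ?_⟩
  · intro V _ _ _ π hπ
    obtain ⟨d, hg, hirr⟩ := box1_data hq π hπ
    have hx : (π.comp κ) (ux F q) = π (bx F q 0) := by rw [AlgHom.comp_apply, hκx]
    have hy : (π.comp κ) (uy F q) = π (bx F q 2) := by rw [AlgHom.comp_apply, hκy]
    refine ⟨⟨hπ.1.1, fun W hW => hirr W ?_ ?_⟩, ?_⟩
    · rw [← hx]; exact hW _
    · rw [← hy]; exact hW _
    · rw [hx, hy]
      have t0 := type_of_good (hg 0)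
      have t2 := type_of_good (hg 2)
      exact ⟨not_nilpotent_of_good hq (hg 0), not_nilpotent_of_good hq (hg 2),
        d, t0.1, t2.1, t0.2, t2.2⟩
  · intro V _ _ _ W _ _ _ π π' hπ hπ'
    constructor
    · rintro ⟨σ, hσ⟩
      obtain ⟨d, hg, hirr⟩ := box1_data hq π hπ
      have s0 : ∀ v, σ (π (bx F q 0) v) = π' (bx F q 0) (σ v) := fun v => by
        simpa [hκx] using hσ (ux F q) v
      have s2 : ∀ v, σ (π (bx F q 2) v) = π' (bx F q 2) (σ v) := fun v => by
        simpa [hκy] using hσ (uy F q) v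
      have hirr' : Irr2 (π (bx F q 2)) (π (bx F q 0)) := fun W a b => hirr W b a
      refine repIso_of_gens π π' σ (zmod4_forall s0 ?_ s2 ?_)
      · exact intertwine hq (box_weyl π 0) (box_weyl π 1) (box_weyl π' 0) (box_weyl π' 1)
          (hg 0) hirr σ s0 s2
      · exact intertwine hq (box_weyl π 2) (box_weyl π 3) (box_weyl π' 2) (box_weyl π' 3)
          (hg 2) hirr' σ s2 s0
    · rintro ⟨σ, hσ⟩
      exact ⟨σ, fun a v => hσ (κ a) v⟩
  · rintro V _ _ _ Φ ⟨⟨hnt, hirr⟩, -, -, d, sx, sy, ex, ey⟩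
    have hX := good_of_type hq sx ex
    have hZ := good_of_type hq sy ey
    have hXZ := uqp_serre_x Φ
    have hZX := uqp_serre_y Φ
    have hirr2 : Irr2 (Φ (ux F q)) (Φ (uy F q)) := fun W a b =>
      hirr W (uqp_invariant Φ W a b)
    obtain ⟨Y, hXY, hYZ, hY⟩ := exists_weyl hq hXZ hZX hirr2 hX hZ
    obtain ⟨Y', hZY, hYX, hY'⟩ := exists_weyl hq hZX hXZ (fun W a b => hirr2 W b a) hZ hX
    have hYY := serre_of_weyl hq hXY hYZ hZY hYX hX hY hZ
    have hYY' := serre_of_weyl hq hZY hYX hXY hYZ hZ hY' hX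
    obtain ⟨π, hπ⟩ := exists_box_rep (q := q) (![Φ (ux F q), Y, Φ (uy F q), Y'])
      (zmod4_forall hXY hYZ hZY hYX) (zmod4_forall hXZ hYY hZX hYY')
    have p0 : π (bx F q 0) = Φ (ux F q) := hπ 0
    have p1 : π (bx F q 1) = Y := hπ 1
    have p2 : π (bx F q 2) = Φ (uy F q) := hπ 2
    have p3 : π (bx F q 3) = Y' := hπ 3
    have hcomp : π.comp κ = Φ :=
      uqp_hom_ext (by rw [AlgHom.comp_apply, hκx, p0]) (by rw [AlgHom.comp_apply, hκy, p2])
    refine ⟨π, ⟨⟨hnt, fun W hW => hirr W fun a => ?_⟩, d, ?_⟩, hcomp⟩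
    · rw [← hcomp]; exact hW (κ a)
    · refine zmod4_forall ?_ ?_ ?_ ?_
      · rw [p0]; exact type_of_good hX
      · rw [p1]; exact type_of_good hY
      · rw [p2]; exact type_of_good hZ
      · rw [p3]; exact type_of_good hY'
end
end

section
/- For each a ∈ F with a ∉ {0, 1} there exists a □_q-module structure V(1,a) on F² in which, with respect to the standard basis, x_0 acts by the matrix [[q^{−1}, (q−q^{−1})a^{−1}],[0, q]], x_1 acts by [[q, q^{−1}−q],[0, q^{−1}]], x_2 acts by [[q, 0],[q−q^{−1}, q^{−1}]], and x_3 acts by [[q^{−1}, 0],[(q^{−1}−q)a, q]]. Each such V(1,a) is an irreducible □_q-module of type 1 and diameter 1, and every finite-dimensional irreducible □_q-module of type 1 and diameter 1 is isomorphic to V(1,a) for exactly one a ∈ F∖{0,1}. -/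
/-!
Write `s = q - q⁻¹`. On a type 1, diameter 1 module every generator satisfies
`(x_i - q)(x_i - q⁻¹) = 0`, and the first relation then says exactly that the `q⁻¹`-eigenspace of
`x_i` equals the `q`-eigenspace of `x_{i+1}` (`eig_iff`). Calling this space `U_i`, the module is a
system of four subspaces with cyclically adjacent ones complementary; the cubic relations are
automatic (`cubic_of_quad`).

Given an irreducible such module, the operator `(x_0 - q)(x_2 - q)` preserves `U_0`, so it has an
eigenvector `u ∈ U_0`, with eigenvalue `l`, since the field is algebraically closed. Put
`w = (x_2 - q) u ∈ U_2`. Since adjacent `U_i` meet trivially, `w ≠ 0` and `l ≠ 0`, and the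
decompositions `u = (u + s⁻¹ w) - s⁻¹ w` along `U_1 ⊕ U_2` and `w = (w + l s⁻¹ u) - l s⁻¹ u` along
`U_3 ⊕ U_0` determine the action of all four generators on `u, w`. Irreducibility forces
`u, s⁻¹ w` to be a basis, on which the action is that of `V(1, a)` with `a = s² / l`. An irreducible
module of diameter 1 has no common eigenvector (`no_common_eigenvector`), as it would be
one-dimensional while `x_0` has two eigenvalues; this gives the linear independence of `u, w`,
and `a ≠ 1` because `(1, 1)` is a common eigenvector in `V(1, 1)`.

Uniqueness of `a` follows from the trace of `x_0 x_2`, which is `2 + s² a⁻¹` on `V(1, a)`.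
-/

noncomputable section

open FreeAlgebra

variable (F : Type) [Field F]

variable {F}

/-! ### Single operators with eigenvalues `q` and `q⁻¹` -/

theorem q_sub_inv_ne_zero {q : F} (hq0 : q ≠ 0) (hq2 : q ^ 2 ≠ 1) : q - q⁻¹ ≠ 0 := by
  intro h
  apply hq2
  field_simp at h
  linear_combination h

/-- Elementwise form of the diameter 1 condition on a single generator: `f` is annihilated by
`(X - q)(X - q⁻¹)` and both roots are eigenvalues. -/
theorem diamOne_iff {q : F} (hq0 : q ≠ 0) (hq2 : q ^ 2 ≠ 1) {V : Type} [AddCommGroup V]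
    [Module F V] (f : Module.End F V) :
    (SemisimpleOn F f ∧
      EigSet F f = {θ : F | ∃ n : ℕ, n ≤ 1 ∧ θ = q ^ (((1 : ℕ) : ℤ) - 2 * (n : ℤ))}) ↔
    ((∀ v, f (f v) = (q + q⁻¹) • f v - v) ∧ (∃ v, v ≠ 0 ∧ f v = q • v) ∧
      ∃ v, v ≠ 0 ∧ f v = q⁻¹ • v) := by
  have hs := q_sub_inv_ne_zero hq0 hq2
  have hset : {θ : F | ∃ n : ℕ, n ≤ 1 ∧ θ = q ^ (((1 : ℕ) : ℤ) - 2 * (n : ℤ))}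
      = {θ | θ = q ∨ θ = q⁻¹} := by
    ext θ
    constructor
    · rintro ⟨n, hn, rfl⟩
      interval_cases n
      · left; simp
      · right; norm_num
    · rintro (rfl | rfl)
      · exact ⟨0, by norm_num, by simp⟩
      · exact ⟨1, le_rfl, by norm_num⟩
  have hmem : ∀ θ, θ ∈ EigSet F f ↔ ∃ v, v ≠ 0 ∧ f v = θ • v := by
    intro θ
    simp only [EigSet, Set.mem_ofPred_eq, Submodule.ne_bot_iff, Module.End.mem_eigenspace_iff]
    exact ⟨fun ⟨v, h1, h2⟩ => ⟨v, h2, h1⟩, fun ⟨v, h1, h2⟩ => ⟨v, h2, h1⟩⟩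
  rw [hset]
  constructor
  · rintro ⟨h1, h2⟩
    have hq : ∀ θ, (∃ v, v ≠ 0 ∧ f v = θ • v) ↔ (θ = q ∨ θ = q⁻¹) := by
      intro θ
      rw [← hmem, h2]; rfl
    refine ⟨?_, (hq q).2 (Or.inl rfl), (hq q⁻¹).2 (Or.inr rfl)⟩
    intro v
    have hv : v ∈ ⨆ θ : F, Module.End.eigenspace f θ := by
      have : (⨆ θ : F, Module.End.eigenspace f θ) = ⊤ := h1
      rw [this]; trivial
    induction hv using Submodule.iSup_induction' with
    | mem θ x hx =>
      rw [Module.End.mem_eigenspace_iff] at hx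
      by_cases h0 : x = 0
      · simp [h0]
      · rcases (hq θ).1 ⟨x, h0, hx⟩ with h | h <;> subst h <;> rw [hx, map_smul, hx] <;>
          match_scalars <;> field_simp <;> ring
    | zero => simp
    | add x y _ _ hx hy => rw [map_add, map_add, hx, hy]; module
  · rintro ⟨h1, h2, h3⟩
    constructor
    · unfold SemisimpleOn
      rw [eq_top_iff]
      intro v _
      have e : v = (q - q⁻¹)⁻¹ • (f v - q⁻¹ • v) - (q - q⁻¹)⁻¹ • (f v - q • v) := by
        have : (q - q⁻¹)⁻¹ * (q - q⁻¹) = 1 := inv_mul_cancel₀ hs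
        linear_combination (norm := module) -(this • v)
      rw [e]
      refine Submodule.sub_mem _ (Submodule.smul_mem _ _ (Submodule.mem_iSup_of_mem q ?_))
        (Submodule.smul_mem _ _ (Submodule.mem_iSup_of_mem q⁻¹ ?_))
      · rw [Module.End.mem_eigenspace_iff, map_sub, map_smul, h1]
        match_scalars <;> field_simp <;> ring
      · rw [Module.End.mem_eigenspace_iff, map_sub, map_smul, h1]
        match_scalars <;> field_simp <;> ring
    · ext θ
      rw [hmem]
      constructor
      · rintro ⟨v, hv, h⟩
        have h4 := h1 v
        rw [h, map_smul, h] at h4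
        have h5 : ((θ - q) * (θ - q⁻¹)) • v = 0 := by
          have : q * q⁻¹ = 1 := mul_inv_cancel₀ hq0
          linear_combination (norm := module) h4 + this • v
        rcases mul_eq_zero.1 ((smul_eq_zero.1 h5).resolve_right hv) with h | h
        · exact Or.inl (sub_eq_zero.1 h)
        · exact Or.inr (sub_eq_zero.1 h)
      · rintro (rfl | rfl)
        · exact h2
        · exact h3

/-- The cubic relation of `□_q` holds for any `x` annihilated by `(X - q)(X - q⁻¹)`, since then
`x³ = [3] x - [2]`. -/
theorem cubic_of_quad {q : F} (hq0 : q ≠ 0) (hq2 : q ^ 2 ≠ 1) {A : Type} [Ring A] [Algebra F A]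
    (x y : A) (h : x * x = (q + q⁻¹) • x - 1) :
    x ^ 3 * y + ((q ^ 3 - (q⁻¹) ^ 3) / (q - q⁻¹)) • (x * y * x ^ 2) =
      ((q ^ 3 - (q⁻¹) ^ 3) / (q - q⁻¹)) • (x ^ 2 * y * x) + y * x ^ 3 := by
  have hs := q_sub_inv_ne_zero hq0 hq2
  have hc : (q ^ 3 - (q⁻¹) ^ 3) / (q - q⁻¹) = (q + q⁻¹) ^ 2 - 1 := by
    rw [div_eq_iff hs]; field_simp; ring
  have h2 : x ^ 2 = (q + q⁻¹) • x - 1 := by rw [pow_two, h]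
  have h3 : x ^ 3 = ((q + q⁻¹) ^ 2 - 1) • x - (q + q⁻¹) • 1 := by
    rw [pow_succ, h2, sub_mul, smul_mul_assoc, h, one_mul]; module
  rw [hc, h2, h3]
  simp only [sub_mul, mul_sub, smul_mul_assoc, mul_smul_comm, one_mul, mul_one, smul_sub]
  module

/-! ### Representations of `□_q` and its generators -/

/-- A representation of `□_q` from four operators satisfying the first relation and the
quadratic equation. -/
theorem exists_rep {q : F} (hq0 : q ≠ 0) (hq2 : q ^ 2 ≠ 1) {A : Type} [Ring A] [Algebra F A]
    (X : ZMod 4 → A) (h1 : ∀ i, q • (X i * X (i + 1)) - q⁻¹ • (X (i + 1) * X i) = (q - q⁻¹) • 1)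
    (h2 : ∀ i, X i * X i = (q + q⁻¹) • X i - 1) :
    ∃ π : BoxQ F q →ₐ[F] A, ∀ i, π (bx F q i) = X i := by
  refine ⟨RingQuot.liftAlgHom F ⟨FreeAlgebra.lift F X, ?_⟩, ?_⟩
  · intro x y hxy
    cases hxy with
    | rel1 i => simpa using h1 i
    | rel2 i => simpa using cubic_of_quad hq0 hq2 (X i) (X (i + 2)) (h2 i)
  · intro i
    simp [bx]

theorem bx_rel (q : F) (i : ZMod 4) :
    q • (bx F q i * bx F q (i + 1)) - q⁻¹ • (bx F q (i + 1) * bx F q i) = (q - q⁻¹) • 1 := by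
  have := RingQuot.mkAlgHom_rel F (BoxRel.rel1 (F := F) (q := q) i)
  simpa [bx] using this

theorem bx_induction {q : F} {P : BoxQ F q → Prop} (hx : ∀ i, P (bx F q i))
    (hc : ∀ c : F, P (algebraMap F _ c)) (hm : ∀ a b, P a → P b → P (a * b))
    (ha : ∀ a b, P a → P b → P (a + b)) (a : BoxQ F q) : P a := by
  obtain ⟨b, rfl⟩ := RingQuot.mkAlgHom_surjective F (BoxRel F q) a
  induction b using FreeAlgebra.induction with
  | grade0 r => rw [AlgHom.commutes]; exact hc r
  | grade1 i => exact hx i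
  | mul a b h1 h2 => rw [map_mul]; exact hm _ _ h1 h2
  | add a b h1 h2 => rw [map_add]; exact ha _ _ h1 h2

theorem invariant_of_gens {q : F} {V : Type} [AddCommGroup V] [Module F V]
    (π : BoxQ F q →ₐ[F] Module.End F V) (W : Submodule F V)
    (h : ∀ i, ∀ v ∈ W, π (bx F q i) v ∈ W) (a : BoxQ F q) : ∀ v ∈ W, π a v ∈ W := by
  induction a using bx_induction with
  | hx i => exact h i
  | hc c =>
    intro v hv
    rw [AlgHom.commutes, Module.algebraMap_end_apply]
    exact W.smul_mem _ hv
  | hm a b h1 h2 =>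
    intro v hv
    rw [map_mul]
    exact h1 _ (h2 _ hv)
  | ha a b h1 h2 =>
    intro v hv
    rw [map_add]
    exact W.add_mem (h1 _ hv) (h2 _ hv)

theorem intertwine_of_gens {q : F} {V W : Type} [AddCommGroup V] [Module F V]
    [AddCommGroup W] [Module F W]
    (π : BoxQ F q →ₐ[F] Module.End F V) (π' : BoxQ F q →ₐ[F] Module.End F W) (σ : V →ₗ[F] W)
    (h : ∀ i v, σ (π (bx F q i) v) = π' (bx F q i) (σ v)) (a : BoxQ F q) :
    ∀ v, σ (π a v) = π' a (σ v) := by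
  induction a using bx_induction with
  | hx i => exact h i
  | hc c =>
    intro v
    simp [AlgHom.commutes, Module.algebraMap_end_apply]
  | hm a b h1 h2 =>
    intro v
    simp [h1, h2]
  | ha a b h1 h2 =>
    intro v
    simp [h1, h2]

theorem forall_zmod4 {P : ZMod 4 → Prop} (h0 : P 0) (h1 : P 1) (h2 : P 2) (h3 : P 3) :
    ∀ i, P i := by
  intro i
  fin_cases i <;> assumption

/-! ### The modules `V(1, a)` -/

/-- The matrices by which the generators act on `V(1, a)`. -/
def evalMat (q a : F) : ZMod 4 → Matrix (Fin 2) (Fin 2) F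
  | 0 => !![q⁻¹, (q - q⁻¹) * a⁻¹; 0, q]
  | 1 => !![q, q⁻¹ - q; 0, q⁻¹]
  | 2 => !![q, 0; q - q⁻¹, q⁻¹]
  | 3 => !![q⁻¹, 0; (q⁻¹ - q) * a, q]

theorem evalMat_quad {q : F} (hq0 : q ≠ 0) (a : F) (i : ZMod 4) :
    evalMat q a i * evalMat q a i = (q + q⁻¹) • evalMat q a i - 1 := by
  revert i
  apply forall_zmod4 <;> ext i j <;> fin_cases i <;> fin_cases j <;>
    simp [evalMat, Matrix.mul_apply, Fin.sum_univ_two] <;> field_simp <;> ring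

theorem evalMat_rel {q : F} (hq0 : q ≠ 0) {a : F} (ha : a ≠ 0) (i : ZMod 4) :
    q • (evalMat q a i * evalMat q a (i + 1)) - q⁻¹ • (evalMat q a (i + 1) * evalMat q a i)
      = (q - q⁻¹) • 1 := by
  have e1 : (0 : ZMod 4) + 1 = 1 := by decide
  have e2 : (1 : ZMod 4) + 1 = 2 := by decide
  have e3 : (2 : ZMod 4) + 1 = 3 := by decide
  have e4 : (3 : ZMod 4) + 1 = 0 := by decide
  revert i
  apply forall_zmod4 <;> simp only [e1, e2, e3, e4] <;>
    ext i j <;> fin_cases i <;> fin_cases j <;>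
    simp [evalMat] <;> field_simp <;> ring

theorem exists_evalRep {q : F} (hq0 : q ≠ 0) (hq2 : q ^ 2 ≠ 1) {a : F} (ha : a ≠ 0) :
    ∃ π : BoxQ F q →ₐ[F] Module.End F (Fin 2 → F),
      ∀ i, π (bx F q i) = Matrix.toLin' (evalMat q a i) := by
  obtain ⟨π, hπ⟩ := exists_rep hq0 hq2 _ (evalMat_rel hq0 ha) (evalMat_quad hq0 a)
  refine ⟨(Matrix.toLinAlgEquiv' : _ ≃ₐ[F] _).toAlgHom.comp π, fun i => ?_⟩
  simp [hπ]
  rfl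

theorem evalRep_irrep {q : F} (hq0 : q ≠ 0) (hq2 : q ^ 2 ≠ 1) {a : F} (ha : a ≠ 0) (ha1 : a ≠ 1)
    (π : BoxQ F q →ₐ[F] Module.End F (Fin 2 → F))
    (hπ : ∀ i, π (bx F q i) = Matrix.toLin' (evalMat q a i)) : IsIrrep F π := by
  have hs := q_sub_inv_ne_zero hq0 hq2
  refine ⟨inferInstance, fun W hW => ?_⟩
  by_cases hb : W = ⊥
  · exact Or.inl hb
  right
  obtain ⟨v, hv, hv0⟩ := (Submodule.ne_bot_iff W).1 hb
  have key : ∀ i, ∀ v ∈ W, (evalMat q a i).mulVec v ∈ W := by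
    intro i v hv
    have := hW (bx F q i) v hv
    rwa [hπ, Matrix.toLin'_apply] at this
  have scal : ∀ c : F, c ≠ 0 → (![c, 0] : Fin 2 → F) ∈ W → (![1, 0] : Fin 2 → F) ∈ W := by
    intro c hc h
    have := W.smul_mem c⁻¹ h
    simpa [hc] using this
  -- `x_0 - q` and `x_1 - q⁻¹` both map into the first coordinate line, and `a ≠ 1` makes
  -- their kernels meet trivially.
  have he0 : (![1, 0] : Fin 2 → F) ∈ W := by
    by_cases h : v 0 = v 1
    · refine scal ((q - q⁻¹) * (a⁻¹ - 1) * v 0) ?_ ?_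
      · refine mul_ne_zero (mul_ne_zero hs ?_) ?_
        · intro h'
          exact ha1 (inv_eq_one.1 (sub_eq_zero.1 h'))
        · intro h'
          apply hv0
          ext i
          fin_cases i
          · simpa using h'
          · simpa [← h] using h'
      · convert W.sub_mem (key 0 v hv) (W.smul_mem q hv) using 1
        ext i
        fin_cases i <;> simp [evalMat, dotProduct, Fin.sum_univ_two, ← h]
        ring
    · refine scal ((q - q⁻¹) * (v 0 - v 1)) (mul_ne_zero hs (sub_ne_zero.2 h)) ?_
      convert W.sub_mem (key 1 v hv) (W.smul_mem q⁻¹ hv) using 1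
      ext i
      fin_cases i <;> simp [evalMat, dotProduct, Fin.sum_univ_two]
      ring
  have he1 : (![0, 1] : Fin 2 → F) ∈ W := by
    convert W.smul_mem (q - q⁻¹)⁻¹ (W.sub_mem (key 2 _ he0) (W.smul_mem q he0)) using 1
    ext i
    fin_cases i <;> simp [evalMat, Matrix.vecHead, Matrix.vecTail, hs]
  rw [eq_top_iff]
  intro x _
  convert W.add_mem (W.smul_mem (x 0) he0) (W.smul_mem (x 1) he1) using 1
  ext i
  fin_cases i <;> simp

theorem evalRep_type1 {q : F} (hq0 : q ≠ 0) (hq2 : q ^ 2 ≠ 1) {a : F} (ha : a ≠ 0)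
    (π : BoxQ F q →ₐ[F] Module.End F (Fin 2 → F))
    (hπ : ∀ i, π (bx F q i) = Matrix.toLin' (evalMat q a i)) : Type1Diam F q π 1 := by
  have hne : ∀ c : F, (![1, c] : Fin 2 → F) ≠ 0 := fun c h => by simpa using congrFun h 0
  have hne' : (![0, 1] : Fin 2 → F) ≠ 0 := fun h => by simpa using congrFun h 1
  intro i
  rw [diamOne_iff hq0 hq2]
  refine ⟨fun v => ?_, ?_⟩
  · have := congrArg (fun M => Matrix.mulVec M v) (evalMat_quad hq0 a i)
    simpa [hπ, Matrix.sub_mulVec, Matrix.smul_mulVec, ← Matrix.mulVec_mulVec] using this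
  · rw [hπ]
    revert i
    apply forall_zmod4
    · refine ⟨⟨![1, a], hne a, ?_⟩, ⟨![1, 0], hne 0, ?_⟩⟩ <;> ext i <;> fin_cases i <;>
        simp [evalMat, Matrix.mulVec, dotProduct, Fin.sum_univ_two, ha]
    · refine ⟨⟨![1, 0], hne 0, ?_⟩, ⟨![1, 1], hne 1, ?_⟩⟩ <;> ext i <;> fin_cases i <;>
        simp [evalMat, Matrix.mulVec, dotProduct, Fin.sum_univ_two]
    · refine ⟨⟨![1, 1], hne 1, ?_⟩, ⟨![0, 1], hne', ?_⟩⟩ <;> ext i <;> fin_cases i <;>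
        simp [evalMat, Matrix.mulVec, dotProduct, Fin.sum_univ_two]
    · refine ⟨⟨![0, 1], hne', ?_⟩, ⟨![1, a], hne a, ?_⟩⟩ <;> ext i <;> fin_cases i <;>
        simp [evalMat, Matrix.mulVec, dotProduct, Fin.sum_univ_two] <;> ring

/-- The trace of `x_0 x_2` recovers `a` from any module isomorphic to `V(1, a)`. -/
theorem trace_of_repIso {q : F} (hq0 : q ≠ 0) {a : F} {V : Type} [AddCommGroup V] [Module F V]
    (π : BoxQ F q →ₐ[F] Module.End F V) (π' : BoxQ F q →ₐ[F] Module.End F (Fin 2 → F))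
    (h0 : π' (bx F q 0) = Matrix.toLin' !![q⁻¹, (q - q⁻¹) * a⁻¹; 0, q])
    (h2 : π' (bx F q 2) = Matrix.toLin' !![q, 0; q - q⁻¹, q⁻¹])
    (h : RepIso F π' π) :
    LinearMap.trace F V (π (bx F q 0 * bx F q 2)) = 2 + (q - q⁻¹) ^ 2 * a⁻¹ := by
  obtain ⟨σ, hσ⟩ := h
  have e : π (bx F q 0 * bx F q 2) = σ.conj (π' (bx F q 0 * bx F q 2)) := by
    ext v
    rw [LinearEquiv.conj_apply_apply, hσ, LinearEquiv.apply_symm_apply]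
  rw [e, LinearMap.trace_conj', map_mul, h0, h2, Module.End.mul_eq_comp, ← Matrix.toLin'_mul,
    Matrix.trace_toLin'_eq]
  simp [Matrix.trace, Fin.sum_univ_two]
  field_simp
  ring

/-! ### Classification -/

/-- The first relation makes the `q⁻¹`-eigenspace of `x` (playing `x_i`) coincide with the
`q`-eigenspace of `y` (playing `x_{i+1}`): on such vectors, the relation shows
that `y - q` takes values in the `q⁻³`-eigenspace of `x`, resp. `x - q⁻¹` in the `q³`-eigenspace of
`y`, and these eigenspaces are zero. -/
theorem eig_iff {q : F} (hq0 : q ≠ 0) (hq2 : q ^ 2 ≠ 1) (hq4 : q ^ 4 ≠ 1) {V : Type}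
    [AddCommGroup V] [Module F V] (x y : Module.End F V)
    (hx : ∀ v, x (x v) = (q + q⁻¹) • x v - v) (hy : ∀ v, y (y v) = (q + q⁻¹) • y v - v)
    (hr : ∀ v, q • x (y v) - q⁻¹ • y (x v) = (q - q⁻¹) • v) (v : V) :
    x v = q⁻¹ • v ↔ y v = q • v := by
  have hc : (q ^ 3 - q) * (q ^ 3 - q⁻¹) ≠ 0 := by
    have : (q ^ 3 - q) * (q ^ 3 - q⁻¹) = (q ^ 2 - 1) * (q ^ 4 - 1) := by
      field_simp
    rw [this]
    exact mul_ne_zero (sub_ne_zero.2 hq2) (sub_ne_zero.2 hq4)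
  constructor
  · intro h
    have h1 := hr v
    rw [h, map_smul] at h1
    -- `w = (y - q) v` satisfies `x w = q⁻³ w`.
    have h2 : x (y v) = (q⁻¹ ^ 3) • y v + (1 - q⁻¹ ^ 2) • v := by
      have : x (y v) = q⁻¹ • (q • x (y v)) := by rw [smul_smul, inv_mul_cancel₀ hq0, one_smul]
      rw [this, sub_eq_iff_eq_add.1 h1]
      match_scalars <;> field_simp
    have h3 := hx (y v)
    rw [h2, map_add, map_smul, map_smul, h2, h] at h3
    have h4 : ((q ^ 3 - q) * (q ^ 3 - q⁻¹)) • (y v - q • v) = 0 := by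
      rw [← sub_eq_zero] at h3
      rw [← smul_zero (q ^ 6), ← h3]
      match_scalars <;> field_simp <;> ring
    exact sub_eq_zero.1 ((smul_eq_zero.1 h4).resolve_left hc)
  · intro h
    have h1 := hr v
    rw [h, map_smul] at h1
    -- `w = (x - q⁻¹) v` satisfies `y w = q³ w`.
    have h2 : y (x v) = (q ^ 3) • x v + (1 - q ^ 2) • v := by
      have : y (x v) = q • (q⁻¹ • y (x v)) := by rw [smul_smul, mul_inv_cancel₀ hq0, one_smul]
      rw [this, ← sub_sub_cancel (q • q • x v) (q⁻¹ • y (x v)), h1]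
      match_scalars <;> field_simp <;> ring
    have h3 := hy (x v)
    rw [h2, map_add, map_smul, map_smul, h2, h] at h3
    have h4 : ((q ^ 3 - q) * (q ^ 3 - q⁻¹)) • (x v - q⁻¹ • v) = 0 := by
      rw [← sub_eq_zero] at h3
      rw [← h3]
      match_scalars <;> field_simp <;> ring
    exact sub_eq_zero.1 ((smul_eq_zero.1 h4).resolve_left hc)

theorem no_common_eigenvector {q : F} (hs : q - q⁻¹ ≠ 0) {V : Type} [AddCommGroup V] [Module F V]
    (π : BoxQ F q →ₐ[F] Module.End F V) (hπ : IsIrrep F π)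
    (hq : ∃ v, v ≠ 0 ∧ π (bx F q 0) v = q • v) (hp : ∃ v, v ≠ 0 ∧ π (bx F q 0) v = q⁻¹ • v)
    (v : V) (h : ∀ i, ∃ c : F, π (bx F q i) v = c • v) : v = 0 := by
  have hinv := invariant_of_gens π (Submodule.span F {v}) (by
    intro i w hw
    obtain ⟨b, rfl⟩ := Submodule.mem_span_singleton.1 hw
    obtain ⟨c, hc⟩ := h i
    rw [map_smul, hc]
    exact Submodule.smul_mem _ _ (Submodule.smul_mem _ _ (Submodule.mem_span_singleton_self v)))
  rcases hπ.2 _ hinv with h1 | h1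
  · exact Submodule.span_singleton_eq_bot.1 h1
  · exfalso
    obtain ⟨c, hc⟩ := h 0
    have key : ∀ θ : F, (∃ w, w ≠ 0 ∧ π (bx F q 0) w = θ • w) → θ = c := by
      rintro θ ⟨w, hw, hθ⟩
      have : w ∈ Submodule.span F {v} := by rw [h1]; trivial
      obtain ⟨b, rfl⟩ := Submodule.mem_span_singleton.1 this
      rw [map_smul, hc, smul_comm] at hθ
      exact (smul_left_injective F hw hθ).symm
    exact hs (sub_eq_zero.2 ((key q hq).trans (key q⁻¹ hp).symm))

/-- An irreducible module of type 1 and diameter 1 contains linearly independent `u, z` on which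
the generators act by the matrices of `V(1, a)`. -/
theorem exists_normal_form [IsAlgClosed F] {q : F} (hq0 : q ≠ 0) (hq2 : q ^ 2 ≠ 1)
    (hq4 : q ^ 4 ≠ 1) {V : Type} [AddCommGroup V] [Module F V] [FiniteDimensional F V]
    (π : BoxQ F q →ₐ[F] Module.End F V) (hπ : IsIrrep F π) (ht : Type1Diam F q π 1) :
    ∃ (a : F) (u z : V), a ≠ 0 ∧ a ≠ 1 ∧ LinearIndependent F ![u, z] ∧
      (π (bx F q 0) u = q⁻¹ • u ∧ π (bx F q 0) z = ((q - q⁻¹) * a⁻¹) • u + q • z) ∧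
      (π (bx F q 1) u = q • u ∧ π (bx F q 1) z = (q⁻¹ - q) • u + q⁻¹ • z) ∧
      (π (bx F q 2) u = q • u + (q - q⁻¹) • z ∧ π (bx F q 2) z = q⁻¹ • z) ∧
      (π (bx F q 3) u = q⁻¹ • u + ((q⁻¹ - q) * a) • z ∧ π (bx F q 3) z = q • z) := by
  have hs := q_sub_inv_ne_zero hq0 hq2
  have ht' := fun i => (diamOne_iff hq0 hq2 _).1 (ht i)
  have hr : ∀ i v, q • π (bx F q i) (π (bx F q (i + 1)) v)
      - q⁻¹ • π (bx F q (i + 1)) (π (bx F q i) v) = (q - q⁻¹) • v := by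
    intro i v
    simpa using congrArg (fun a => π a v) (bx_rel q i)
  have hU : ∀ i v, π (bx F q i) v = q⁻¹ • v ↔ π (bx F q (i + 1)) v = q • v := fun i v =>
    eig_iff hq0 hq2 hq4 _ _ (ht' i).1 (ht' (i + 1)).1 (hr i) v
  have hnc := no_common_eigenvector hs π hπ (ht' 0).2.1 (ht' 0).2.2
  obtain ⟨-, -, u₀, hu₀, hu₀'⟩ := ht' 0
  have hU0 := hU 0
  have hU1 := hU 1
  have hU2 := hU 2
  have hU3 := hU 3
  have e1 : (0 : ZMod 4) + 1 = 1 := by decide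
  have e2 : (1 : ZMod 4) + 1 = 2 := by decide
  have e3 : (2 : ZMod 4) + 1 = 3 := by decide
  have e4 : (3 : ZMod 4) + 1 = 0 := by decide
  rw [e1] at hU0
  rw [e2] at hU1
  rw [e3] at hU2
  rw [e4] at hU3
  have q0 := (ht' 0).1
  have q2 := (ht' 2).1
  generalize hX0 : π (bx F q 0) = X0 at *
  generalize hX1 : π (bx F q 1) = X1 at *
  generalize hX2 : π (bx F q 2) = X2 at *
  generalize hX3 : π (bx F q 3) = X3 at *
  -- `x - q` maps into the `q⁻¹`-eigenspace of `x`, and `x - q⁻¹` into the `q`-eigenspace.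
  have lo : ∀ X : Module.End F V, (∀ v, X (X v) = (q + q⁻¹) • X v - v) → ∀ v,
      X (X v - q • v) = q⁻¹ • (X v - q • v) := by
    intro X h v
    rw [map_sub, map_smul, h]
    match_scalars <;> field_simp <;> ring
  have hi : ∀ X : Module.End F V, (∀ v, X (X v) = (q + q⁻¹) • X v - v) → ∀ v,
      X (X v - q⁻¹ • v) = q • (X v - q⁻¹ • v) := by
    intro X h v
    rw [map_sub, map_smul, h]
    match_scalars <;> field_simp <;> ring
  have disj : ∀ (X : Module.End F V) v, X v = q • v → X v = q⁻¹ • v → v = 0 := by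
    intro X v h h'
    rw [h, ← sub_eq_zero, ← sub_smul] at h'
    exact (smul_eq_zero.1 h').resolve_left hs
  -- An eigenvector of `(x_0 - q)(x_2 - q)` in `U_0`.
  obtain ⟨u, l, hu, hu0, hul⟩ : ∃ (u : V) (l : F), u ≠ 0 ∧ X0 u = q⁻¹ • u ∧
      X0 (X2 u - q • u) - q • (X2 u - q • u) = l • u := by
    let U := Module.End.eigenspace X0 q⁻¹
    let T : Module.End F V := (X0 - q • 1) * (X2 - q • 1)
    have hT : ∀ v ∈ U, T v ∈ U := by
      intro v _
      rw [Module.End.mem_eigenspace_iff]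
      exact lo X0 q0 ((X2 - q • 1) v)
    have : Nontrivial U := ⟨⟨u₀, Module.End.mem_eigenspace_iff.2 hu₀'⟩, 0, fun h =>
      hu₀ (congrArg Subtype.val h)⟩
    obtain ⟨l, hl⟩ := Module.End.exists_eigenvalue (T.restrict hT)
    obtain ⟨u, hu⟩ := hl.exists_hasEigenvector
    refine ⟨u, l, fun h => hu.2 (Subtype.ext h), Module.End.mem_eigenspace_iff.1 u.2, ?_⟩
    exact congrArg Subtype.val hu.apply_eq_smul
  obtain ⟨w, hw⟩ : ∃ w, X2 u - q • u = w := ⟨_, rfl⟩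
  rw [hw] at hul
  have hw2 : X2 w = q⁻¹ • w := by rw [← hw]; exact lo X2 q2 u
  have hw3 := (hU2 w).1 hw2
  have hu1 := (hU0 u).1 hu0
  have hu2 : X2 u = q • u + w := by rw [← hw]; abel
  have hw0 : X0 w = l • u + q • w := by rw [← hul]; abel
  have hwne : w ≠ 0 := by
    intro h
    have h2 : X2 u = q • u := by rw [hu2, h, add_zero]
    exact hu (disj X1 u hu1 ((hU1 u).2 h2))
  have hl : l ≠ 0 := by
    intro h
    have h0 : X0 w = q • w := by rw [hw0, h, zero_smul, zero_add]
    exact hwne (disj X3 w hw3 ((hU3 w).2 h0))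
  -- The `U_1`-component `s⁻¹ (x_2 - q⁻¹) u` of `u` gives the action of `x_1` on `w`.
  have hw1 : X1 w = (-(q - q⁻¹) ^ 2) • u + q⁻¹ • w := by
    have h := (hU1 _).2 (hi X2 q2 u)
    rw [hu2, map_sub, map_add, map_smul, map_smul, hu1] at h
    linear_combination (norm := module) h
  -- The `U_3`-component of `w` gives the action of `x_3` on `u`.
  have hu3 : X3 u = q⁻¹ • u + (-(q - q⁻¹) ^ 2 * l⁻¹) • w := by
    have h := (hU3 _).2 (hi X0 q0 w)
    rw [hw0, map_sub, map_add, map_smul, map_smul, map_smul, hw3] at h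
    have h' : l • X3 u = l • (q⁻¹ • u + (-(q - q⁻¹) ^ 2 * l⁻¹) • w) := by
      have : l * l⁻¹ = 1 := mul_inv_cancel₀ hl
      linear_combination (norm := module) h + (q - q⁻¹) ^ 2 • this • w
    exact smul_right_injective V hl h'
  have hind : LinearIndependent F ![u, (q - q⁻¹)⁻¹ • w] := by
    rw [LinearIndependent.pair_iff' hu]
    intro c hc
    have hc' : w = ((q - q⁻¹) * c) • u := by
      rw [mul_smul, hc, smul_smul, mul_inv_cancel₀ hs, one_smul]
    refine hu (hnc u (forall_zmod4 ?_ ?_ ?_ ?_))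
    · exact ⟨_, hX0 ▸ hu0⟩
    · exact ⟨_, hX1 ▸ hu1⟩
    · refine ⟨q + (q - q⁻¹) * c, ?_⟩
      rw [hX2, hu2, hc', add_smul]
    · refine ⟨q⁻¹ + (-(q - q⁻¹) ^ 2 * l⁻¹) * ((q - q⁻¹) * c), ?_⟩
      rw [hX3, hu3, hc', add_smul, mul_smul _ ((q - q⁻¹) * c)]
  refine ⟨(q - q⁻¹) ^ 2 / l, u, (q - q⁻¹)⁻¹ • w, div_ne_zero (pow_ne_zero _ hs) hl, ?_, hind,
    ⟨hu0, ?_⟩, ⟨hu1, ?_⟩, ⟨?_, ?_⟩, ⟨?_, ?_⟩⟩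
  · intro h1
    rw [div_eq_one_iff_eq hl] at h1
    -- For `a = 1` the vector `s u + w` is a common eigenvector.
    have hz : (q - q⁻¹) • u + w = 0 := by
      refine hnc _ (forall_zmod4 ⟨q, ?_⟩ ⟨q⁻¹, ?_⟩ ⟨q, ?_⟩ ⟨q⁻¹, ?_⟩)
      · rw [hX0, map_add, map_smul, hu0, hw0, ← h1]; module
      · rw [hX1, map_add, map_smul, hu1, hw1]; module
      · rw [hX2, map_add, map_smul, hu2, hw2]; module
      · rw [hX3, map_add, map_smul, hu3, hw3, ← h1, neg_mul, mul_inv_cancel₀ (pow_ne_zero _ hs)]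
        module
    rw [LinearIndependent.pair_iff] at hind
    have := (hind 1 1 (by
      have h2 : (q - q⁻¹)⁻¹ • ((q - q⁻¹) • u + w) = 0 := by rw [hz, smul_zero]
      rw [smul_add, smul_smul, inv_mul_cancel₀ hs] at h2
      rw [one_smul (M := F) (b := (q - q⁻¹)⁻¹ • w)]
      exact h2)).1
    exact one_ne_zero this
  · rw [map_smul, hw0]
    match_scalars <;> field_simp
  · rw [map_smul, hw1]
    match_scalars <;> field_simp <;> ring
  · rw [hu2, smul_smul, mul_inv_cancel₀ hs, one_smul]
  · rw [map_smul, hw2, smul_comm]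
  · rw [hu3]
    match_scalars <;> field_simp <;> ring
  · rw [map_smul, hw3, smul_comm]

variable (F)

/-- The evaluation modules `V(1,a)` for `a ∈ F \ {0,1}`: explicit irreducible type-1
diameter-1 `□_q`-modules on `F²`, and every finite-dimensional irreducible `□_q`-module
of type 1 and diameter 1 is isomorphic to `V(1,a)` for exactly one such `a`. -/
theorem stmt13 [IsAlgClosed F] [CharZero F] (q : F) (hq0 : q ≠ 0)
    (hq1 : ∀ n : ℕ, 0 < n → q ^ n ≠ 1) :
    (∀ a : F, a ≠ 0 → a ≠ 1 →
      ∃ π : BoxQ F q →ₐ[F] Module.End F (Fin 2 → F),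
        π (bx F q 0) = Matrix.toLin' !![q⁻¹, (q - q⁻¹) * a⁻¹; 0, q] ∧
        π (bx F q 1) = Matrix.toLin' !![q, q⁻¹ - q; 0, q⁻¹] ∧
        π (bx F q 2) = Matrix.toLin' !![q, 0; q - q⁻¹, q⁻¹] ∧
        π (bx F q 3) = Matrix.toLin' !![q⁻¹, 0; (q⁻¹ - q) * a, q] ∧
        IsIrrep F π ∧ Type1Diam F q π 1) ∧
    (∀ (V : Type) [AddCommGroup V] [Module F V] [FiniteDimensional F V]
        (π : BoxQ F q →ₐ[F] Module.End F V),
        IsIrrep F π → Type1Diam F q π 1 →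
        ∃! a : F, (a ≠ 0 ∧ a ≠ 1) ∧
          ∃ π' : BoxQ F q →ₐ[F] Module.End F (Fin 2 → F),
            π' (bx F q 0) = Matrix.toLin' !![q⁻¹, (q - q⁻¹) * a⁻¹; 0, q] ∧
            π' (bx F q 1) = Matrix.toLin' !![q, q⁻¹ - q; 0, q⁻¹] ∧
            π' (bx F q 2) = Matrix.toLin' !![q, 0; q - q⁻¹, q⁻¹] ∧
            π' (bx F q 3) = Matrix.toLin' !![q⁻¹, 0; (q⁻¹ - q) * a, q] ∧
            RepIso F π' π) := by
  have hq2 : q ^ 2 ≠ 1 := hq1 2 (by norm_num)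
  have hq4 : q ^ 4 ≠ 1 := hq1 4 (by norm_num)
  have hs := q_sub_inv_ne_zero hq0 hq2
  refine ⟨fun a ha ha1 => ?_, ?_⟩
  · obtain ⟨π, hπ⟩ := exists_evalRep hq0 hq2 ha
    exact ⟨π, hπ 0, hπ 1, hπ 2, hπ 3, evalRep_irrep hq0 hq2 ha ha1 π hπ,
      evalRep_type1 hq0 hq2 ha π hπ⟩
  · intro V _ _ _ π hirr ht
    obtain ⟨a, u, z, ha, ha1, hind, ⟨h0u, h0z⟩, ⟨h1u, h1z⟩, ⟨h2u, h2z⟩, ⟨h3u, h3z⟩⟩ :=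
      exists_normal_form hq0 hq2 hq4 π hirr ht
    obtain ⟨π', hπ'⟩ := exists_evalRep hq0 hq2 ha
    let τ : (Fin 2 → F) →ₗ[F] V := Fintype.linearCombination F ![u, z]
    have hτ : ∀ v : Fin 2 → F, τ v = v 0 • u + v 1 • z := fun v => by
      simp [τ, Fintype.linearCombination_apply, Fin.sum_univ_two]
    have hgen : ∀ i v, τ (π' (bx F q i) v) = π (bx F q i) (τ v) := by
      apply forall_zmod4 <;> intro v <;>
        simp only [hπ', hτ, map_add, map_smul, h0u, h0z, h1u, h1z, h2u, h2z, h3u, h3z] <;>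
        simp [evalMat, Matrix.mulVec, dotProduct, Fin.sum_univ_two] <;> module
    have hint := intertwine_of_gens π' π τ hgen
    have hinj : Function.Injective τ := by
      rw [← LinearMap.ker_eq_bot, LinearMap.ker_eq_bot']
      intro v hv
      rw [hτ] at hv
      have := LinearIndependent.pair_iff.1 hind _ _ hv
      ext i
      fin_cases i
      · exact this.1
      · exact this.2
    -- The range of the nonzero intertwiner is a nonzero submodule, hence everything.
    have hsurj : Function.Surjective τ := by
      rw [← LinearMap.range_eq_top]
      refine (hirr.2 (LinearMap.range τ) ?_).resolve_left ?_
      · rintro b _ ⟨v, rfl⟩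
        exact ⟨π' b v, hint b v⟩
      · intro h
        rw [LinearMap.range_eq_bot] at h
        have h1 : (![1, 0] : Fin 2 → F) = 0 := hinj (by rw [h]; rfl)
        simpa using congrFun h1 0
    refine ⟨a, ⟨⟨ha, ha1⟩, π', hπ' 0, hπ' 1, hπ' 2, hπ' 3,
      LinearEquiv.ofBijective τ ⟨hinj, hsurj⟩, hint⟩, ?_⟩
    rintro b ⟨-, π'', g0, -, g2, -, hiso⟩
    have t1 := trace_of_repIso hq0 π π'' g0 g2 hiso
    have t2 := trace_of_repIso hq0 π π' (hπ' 0) (hπ' 2)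
      ⟨LinearEquiv.ofBijective τ ⟨hinj, hsurj⟩, hint⟩
    rw [t1] at t2
    exact inv_injective (mul_left_cancel₀ (pow_ne_zero 2 hs) (add_left_cancel t2))
end
end
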